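/- arXiv:2409.01868 — 5 statements merged into one kernel-verified Lean document; each statement's English description precedes it below -/
import Mathlib

section
/- Let U be a positive bounded linear operator on X = L^p(E, μ) with spectral radius r(U) > 0, and assume U admits a splitting U = W + K with bounded linear operators W and K such that ‖W‖ < r(U) and K(λ − W)⁻¹ is power compact for every real λ > ‖W‖. Then there exist f₀ ∈ X₊ \ {0} and φ₀ ∈ X'₊ \ {0} such that U f₀ = r(U) f₀ and U* φ₀ = r(U) φ₀. -/
open MeasureTheory Filter ENNReal

/-!
Positivity of `U` makes `R l = (l - U)⁻¹` positive for `l > r`. If some `R l` had norm below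
`1 / (l - r)`, the Neumann series at `l` would give a positive resolvent at some `s < r`, and
`U ^ n ≤ s ^ (n + 1) • R s` would force the spectral radius below `r`. Hence
`1 / (l - r) ≤ ‖R l‖`. The norm of a positive operator can be computed on the positive cone, so
normalizing `R l g` and `φ ∘ R l` with `g, φ ≥ 0` gives approximate positive eigenvectors of `U`
and of its dual. As `r - U = (1 - K (r - W)⁻¹) (r - W)` has left and right parametrices modulo
compact operators, the approximate eigenvectors converge along an ultrafilter, and the weak-*
limit of the approximate eigenfunctionals is nonzero.
-/

open scoped Topology

section GelfandLimit

theorem le_of_tendsto_norm_pow_rpow_of_norm_pow_le {A : Type*} [SeminormedRing A] {a : A}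
    {r s C : ℝ} (hr : Tendsto (fun n : ℕ => ‖a ^ n‖ ^ (1 / (n : ℝ))) atTop (𝓝 r))
    (hs : 0 ≤ s) (ha : ∀ n, ‖a ^ n‖ ≤ C * s ^ n) : r ≤ s := by
  have hC : 0 < max C 1 := lt_max_of_lt_right one_pos
  have hbound : Tendsto (fun n : ℕ => max C 1 ^ (1 / (n : ℝ)) * s) atTop (𝓝 s) := by
    simpa using ((tendsto_const_nhds (x := max C 1)).rpow tendsto_one_div_atTop_nhds_zero_nat
      (.inl hC.ne')).mul_const s
  refine le_of_tendsto_of_tendsto hr hbound ?_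
  filter_upwards [eventually_ne_atTop 0] with n hn
  calc ‖a ^ n‖ ^ (1 / (n : ℝ)) ≤ (max C 1 * s ^ n) ^ (1 / (n : ℝ)) := by
        gcongr
        exact (ha n).trans (by gcongr; exact le_max_left C 1)
    _ = max C 1 ^ (1 / (n : ℝ)) * s := by
        rw [Real.mul_rpow hC.le (by positivity), one_div, Real.pow_rpow_inv_natCast hs hn]

theorem summable_inv_smul_pow_of_tendsto_norm_pow_rpow {A : Type*} [NormedRing A]
    [NormedAlgebra ℝ A] [CompleteSpace A] {a : A} {r l : ℝ}
    (hr : Tendsto (fun n : ℕ => ‖a ^ n‖ ^ (1 / (n : ℝ))) atTop (𝓝 r)) (hl : r < l) :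
    Summable fun n : ℕ => (l⁻¹ • a) ^ n := by
  have hr0 : 0 ≤ r := ge_of_tendsto' hr fun n => by positivity
  obtain ⟨s, hrs, hsl⟩ := exists_between hl
  have hs0 : 0 < s := hr0.trans_lt hrs
  have hl0 : 0 < l := hs0.trans hsl
  refine .of_norm_bounded_eventually_nat
    (summable_geometric_of_lt_one (by positivity) ((div_lt_one hl0).2 hsl)) ?_
  filter_upwards [hr.eventually_lt_const hrs, eventually_ne_atTop 0] with n hroot hn
  have hpow : ‖a ^ n‖ ≤ s ^ n := by
    have := pow_le_pow_left₀ (by positivity) hroot.le n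
    rwa [one_div, Real.rpow_inv_natCast_pow (norm_nonneg _) hn] at this
  calc ‖(l⁻¹ • a) ^ n‖ = (l ^ n)⁻¹ * ‖a ^ n‖ := by
        rw [smul_pow, norm_smul, norm_pow, norm_inv, Real.norm_of_nonneg hl0.le, inv_pow]
    _ ≤ (l ^ n)⁻¹ * s ^ n := by gcongr
    _ = (s / l) ^ n := by rw [div_pow, div_eq_inv_mul]

end GelfandLimit

theorem abs_map_le_map_abs {F G 𝓕 : Type*} [AddCommGroup F] [Lattice F] [AddCommGroup G] [Lattice G]
    [FunLike 𝓕 F G] [AddMonoidHomClass 𝓕 F G] {V : 𝓕} (hV : Monotone V) (x : F) :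
    |V x| ≤ V |x| :=
  abs_le'.2 ⟨hV (le_abs_self x), by simpa only [map_neg] using hV (neg_le_abs x)⟩

theorem norm_posPart_smul {E : Type*} [SeminormedAddCommGroup E] [Lattice E] [NormedSpace ℝ E]
    [IsOrderedModule ℝ E] {c : ℝ} (hc : 0 < c) (x : E) : ‖(c • x)⁺‖ = c * ‖x⁺‖ := by
  have hsup : c • (x ⊔ 0) = c • x ⊔ c • 0 := (OrderIso.smulRight (β := E) hc).map_sup x 0
  rw [smul_zero] at hsup
  rw [posPart_def, posPart_def, ← hsup, norm_smul, Real.norm_of_nonneg hc.le]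

theorem monotone_pow_clm {𝕜 F : Type*} [Semiring 𝕜] [AddCommMonoid F] [Module 𝕜 F]
    [TopologicalSpace F] [Preorder F] {V : F →L[𝕜] F} (hV : Monotone V) (n : ℕ) :
    Monotone (V ^ n) := by
  simpa only [FunLike.coe_pow_eq_iterate] using hV.iterate n

section NormedLattice

variable {E : Type*} [NormedAddCommGroup E] [Lattice E] [HasSolidNorm E] [IsOrderedAddMonoid E]

theorem norm_le_norm_of_nonneg_of_le {x y : E} (hx : 0 ≤ x) (hxy : x ≤ y) : ‖x‖ ≤ ‖y‖ :=
  norm_le_norm_of_abs_le_abs <| by rwa [abs_of_nonneg hx, abs_of_nonneg (hx.trans hxy)]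

theorem norm_posPart_le_norm (x : E) : ‖x⁺‖ ≤ ‖x‖ :=
  (norm_le_norm_of_nonneg_of_le (posPart_nonneg x) (sup_le (le_abs_self x) (abs_nonneg x))).trans_eq
    (norm_abs_eq_norm x)

theorem norm_posPart_add_le (x y : E) : ‖(x + y)⁺‖ ≤ ‖x⁺‖ + ‖y⁺‖ :=
  have hle : (x + y)⁺ ≤ x⁺ + y⁺ := sup_le (add_le_add (le_posPart x) (le_posPart y))
    (add_nonneg (posPart_nonneg x) (posPart_nonneg y))
  (norm_le_norm_of_nonneg_of_le (posPart_nonneg _) hle).trans (norm_add_le _ _)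

variable [NormedSpace ℝ E]

theorem exists_linearMap_le_norm_posPart [IsOrderedModule ℝ E] {f : E} (hf : 0 ≤ f) :
    ∃ g : E →ₗ[ℝ] ℝ, (∀ x, g x ≤ ‖x⁺‖) ∧ g f = ‖f‖ := by
  rcases eq_or_ne f 0 with rfl | hf0
  · exact ⟨0, by simp⟩
  obtain ⟨g, hgf, hg⟩ := exists_extension_of_le_sublinear
    (LinearPMap.mkSpanSingleton (K := ℝ) f ‖f‖ hf0) (fun x => ‖x⁺‖)
    (fun c hc x => norm_posPart_smul hc x) norm_posPart_add_le <| by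
      rintro ⟨x, hx⟩
      obtain ⟨c, rfl⟩ := Submodule.mem_span_singleton.1 hx
      suffices c * ‖f‖ ≤ ‖(c • f)⁺‖ by
        simpa only [LinearPMap.mkSpanSingleton'_apply, RingHom.id_apply, smul_eq_mul] using! this
      rcases le_or_gt c 0 with hc | hc
      · exact (mul_nonpos_of_nonpos_of_nonneg hc (norm_nonneg f)).trans (norm_nonneg _)
      · rw [norm_posPart_smul hc, posPart_of_nonneg hf]
  refine ⟨g, hg, ?_⟩
  exact (hgf ⟨f, Submodule.mem_span_singleton_self f⟩).trans
    (LinearPMap.mkSpanSingleton_apply ℝ ℝ hf0 ‖f‖)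

theorem exists_monotone_dual_vector [IsOrderedModule ℝ E] {f : E} (hf : 0 ≤ f) :
    ∃ φ : StrongDual ℝ E, Monotone φ ∧ ‖φ‖ ≤ 1 ∧ φ f = ‖f‖ := by
  obtain ⟨g, hg, hgf⟩ := exists_linearMap_le_norm_posPart hf
  have hle (x : E) : g x ≤ ‖x‖ := (hg x).trans (norm_posPart_le_norm x)
  have hbound (x : E) : ‖g x‖ ≤ 1 * ‖x‖ := by
    rw [one_mul, Real.norm_eq_abs, abs_le']
    exact ⟨hle x, by simpa using hle (-x)⟩
  refine ⟨g.mkContinuous 1 hbound, ?_, g.mkContinuous_norm_le zero_le_one hbound, hgf⟩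
  refine (monotone_iff_map_nonneg _).2 fun x hx => ?_
  have hneg : -g x ≤ 0 := by
    simpa [posPart_of_nonpos (neg_nonpos.2 hx)] using hg (-x)
  exact neg_nonpos.1 hneg

theorem norm_map_le_norm_map_abs {V : E →L[ℝ] E} (hV : Monotone V) (x : E) : ‖V x‖ ≤ ‖V |x|‖ := by
  rw [← norm_abs_eq_norm (V x)]
  exact norm_le_norm_of_nonneg_of_le (abs_nonneg _) (abs_map_le_map_abs hV x)

theorem opNorm_le_opNorm_of_forall_nonneg_le {V S : E →L[ℝ] E} (hV : Monotone V)
    (hVS : ∀ f, 0 ≤ f → V f ≤ S f) : ‖V‖ ≤ ‖S‖ := by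
  refine V.opNorm_le_bound (norm_nonneg _) fun x => ?_
  have hVx : 0 ≤ V |x| := (monotone_iff_map_nonneg V).1 hV _ (abs_nonneg x)
  calc ‖V x‖ ≤ ‖V |x|‖ := norm_map_le_norm_map_abs hV x
    _ ≤ ‖S |x|‖ := norm_le_norm_of_nonneg_of_le hVx (hVS _ (abs_nonneg x))
    _ ≤ ‖S‖ * ‖x‖ := by simpa only [norm_abs_eq_norm] using S.le_opNorm |x|

theorem exists_nonneg_lt_norm_map {V : E →L[ℝ] E} (hV : Monotone V) {c : ℝ} (hc : c < ‖V‖) :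
    ∃ g, 0 ≤ g ∧ ‖g‖ ≤ 1 ∧ c < ‖V g‖ := by
  obtain ⟨x, hx, hcx⟩ := V.exists_lt_apply_of_lt_opNorm hc
  exact ⟨|x|, abs_nonneg x, (norm_abs_eq_norm x).trans_le hx.le,
    hcx.trans_le (norm_map_le_norm_map_abs hV x)⟩

theorem exists_monotone_lt_norm_comp [IsOrderedModule ℝ E] {V : E →L[ℝ] E} (hV : Monotone V)
    {c : ℝ} (hc : c < ‖V‖) :
    ∃ φ : StrongDual ℝ E, Monotone φ ∧ ‖φ‖ ≤ 1 ∧ c < ‖φ ∘L V‖ := by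
  obtain ⟨g, hg, hg1, hcg⟩ := exists_nonneg_lt_norm_map hV hc
  obtain ⟨φ, hφ, hφ1, hφg⟩ := exists_monotone_dual_vector ((monotone_iff_map_nonneg V).1 hV g hg)
  refine ⟨φ, hφ, hφ1, hcg.trans_le ?_⟩
  simpa [hφg] using (φ ∘L V).le_of_opNorm_le_of_le le_rfl hg1

end NormedLattice

section InversePositive

theorem smul_inverse_apply {E : Type*} [NormedAddCommGroup E] [NormedSpace ℝ E] {U : E →L[ℝ] E}
    {s : ℝ} (h : IsUnit (s • 1 - U)) (f : E) :
    s • Ring.inverse (s • 1 - U) f = f + Ring.inverse (s • 1 - U) (U f) := by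
  have hone := congrArg (· f) (Ring.inverse_mul_cancel _ h)
  simp only [mul_sub, mul_smul_comm, mul_one] at hone
  exact sub_eq_iff_eq_add.1 hone

/-- A bounded operator is *inverse-positive* if it is invertible with positive inverse; for
`T = l • 1 - U` this says that the resolvent of `U` at `l` exists and is positive.
Positivity of an operator is expressed by `Monotone`. -/
def IsInversePositive {E : Type*} [NormedAddCommGroup E] [NormedSpace ℝ E] [Preorder E]
    (T : E →L[ℝ] E) : Prop :=
  IsUnit T ∧ Monotone ⇑(Ring.inverse T)

namespace IsInversePositive

variable {E : Type*} [NormedAddCommGroup E] [NormedSpace ℝ E]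

theorem of_mul_eq_one [Preorder E] {T R : E →L[ℝ] E} (hTR : T * R = 1) (hRT : R * T = 1)
    (hR : Monotone R) : IsInversePositive T := by
  let u : (E →L[ℝ] E)ˣ := ⟨T, R, hTR, hRT⟩
  refine ⟨u.isUnit, ?_⟩
  rwa [show Ring.inverse T = R from Ring.inverse_unit u]

theorem mul [Preorder E] {S T : E →L[ℝ] E} (hS : IsInversePositive S) (hT : IsInversePositive T) :
    IsInversePositive (S * T) := by
  refine ⟨hS.1.mul hT.1, ?_⟩
  rw [Ring.inverse_mul (.inl hS.1)]
  exact hT.2.comp hS.2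

theorem smul [PartialOrder E] [IsOrderedModule ℝ E] {T : E →L[ℝ] E}
    (hT : IsInversePositive T) {c : ℝ} (hc : 0 < c) : IsInversePositive (c • T) := by
  refine of_mul_eq_one (R := c⁻¹ • Ring.inverse T) ?_ ?_ (hT.2.const_smul (inv_nonneg.2 hc.le))
  · rw [smul_mul_smul_comm, Ring.mul_inverse_cancel _ hT.1, mul_inv_cancel₀ hc.ne', one_smul]
  · rw [smul_mul_smul_comm, Ring.inverse_mul_cancel _ hT.1, inv_mul_cancel₀ hc.ne', one_smul]

variable [PartialOrder E] [IsOrderedAddMonoid E]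

theorem one_sub [OrderClosedTopology E] {V : E →L[ℝ] E} (hV : Monotone V)
    (hsum : Summable fun n : ℕ => V ^ n) : IsInversePositive (1 - V) := by
  refine of_mul_eq_one hsum.one_sub_mul_tsum_pow hsum.tsum_pow_mul_one_sub ?_
  refine (monotone_iff_map_nonneg _).2 fun f hf => ?_
  exact ((ContinuousLinearMap.apply ℝ E f).hasSum hsum.hasSum).nonneg fun n =>
    (monotone_iff_map_nonneg _).1 (monotone_pow_clm hV n) f hf

variable [IsOrderedModule ℝ E] {U : E →L[ℝ] E} {r l s : ℝ}

theorem smul_one_sub_of_lt [OrderClosedTopology E] [CompleteSpace E] (hU : Monotone U)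
    (hr : Tendsto (fun n : ℕ => ‖U ^ n‖ ^ (1 / (n : ℝ))) atTop (𝓝 r)) (hl : r < l) :
    IsInversePositive (l • 1 - U) := by
  have hl0 : 0 < l := (ge_of_tendsto' hr fun n => by positivity).trans_lt hl
  have hfactor : l • 1 - U = l • (1 - l⁻¹ • U) := by rw [smul_sub, smul_inv_smul₀ hl0.ne']
  rw [hfactor]
  exact (one_sub (hU.const_smul (inv_nonneg.2 hl0.le))
    (summable_inv_smul_pow_of_tendsto_norm_pow_rpow hr hl)).smul hl0

theorem smul_one_sub_sub [OrderClosedTopology E] [CompleteSpace E]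
    (h : IsInversePositive (l • 1 - U)) {d : ℝ} (hd : 0 ≤ d)
    (hd1 : d * ‖Ring.inverse (l • 1 - U)‖ < 1) : IsInversePositive ((l - d) • 1 - U) := by
  set R := Ring.inverse (l • 1 - U) with hR
  have hfactor : (l - d) • 1 - U = (1 - d • R) * (l • 1 - U) := by
    rw [sub_mul, smul_mul_assoc, hR, Ring.inverse_mul_cancel _ h.1, one_mul]
    module
  rw [hfactor]
  refine (one_sub (h.2.const_smul hd) (summable_geometric_of_norm_lt_one ?_)).mul h
  rwa [norm_smul, Real.norm_of_nonneg hd]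

theorem inverse_pow_apply_le (h : IsInversePositive (s • 1 - U)) (hU : Monotone U)
    (hs : 0 ≤ s) (n : ℕ) {f : E} (hf : 0 ≤ f) :
    Ring.inverse (s • 1 - U) ((U ^ n) f) ≤ s ^ n • Ring.inverse (s • 1 - U) f := by
  set R := Ring.inverse (s • 1 - U)
  induction n with
  | zero => simp
  | succ n ih =>
    have hUf : 0 ≤ (U ^ n) f := (monotone_iff_map_nonneg _).1 (monotone_pow_clm hU n) f hf
    calc R ((U ^ (n + 1)) f) = R (U ((U ^ n) f)) := by rw [pow_succ']; rfl
      _ ≤ (U ^ n) f + R (U ((U ^ n) f)) := le_add_of_nonneg_left hUf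
      _ = s • R ((U ^ n) f) := (smul_inverse_apply h.1 _).symm
      _ ≤ s • s ^ n • R f := smul_le_smul_of_nonneg_left ih hs
      _ = s ^ (n + 1) • R f := by rw [smul_smul, pow_succ']

theorem pow_apply_le (h : IsInversePositive (s • 1 - U)) (hU : Monotone U)
    (hs : 0 ≤ s) (n : ℕ) {f : E} (hf : 0 ≤ f) :
    (U ^ n) f ≤ s ^ (n + 1) • Ring.inverse (s • 1 - U) f := by
  set R := Ring.inverse (s • 1 - U)
  have hRU : Monotone (R * U ^ (n + 1)) := h.2.comp (monotone_pow_clm hU (n + 1))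
  calc (U ^ n) f ≤ (U ^ n) f + (R * U ^ (n + 1)) f :=
        le_add_of_nonneg_right ((monotone_iff_map_nonneg _).1 hRU f hf)
    _ = (U ^ n) f + R (U ((U ^ n) f)) := by rw [pow_succ']; rfl
    _ = s • R ((U ^ n) f) := (smul_inverse_apply h.1 _).symm
    _ ≤ s • s ^ n • R f := smul_le_smul_of_nonneg_left (h.inverse_pow_apply_le hU hs n hf) hs
    _ = s ^ (n + 1) • R f := by rw [smul_smul, pow_succ']

end IsInversePositive

end InversePositive

section Resolvent

variable {E : Type*} [NormedAddCommGroup E] [Lattice E] [HasSolidNorm E] [IsOrderedAddMonoid E]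
  [NormedSpace ℝ E] [IsOrderedModule ℝ E] {U : E →L[ℝ] E} {r l s : ℝ}

theorem IsInversePositive.norm_pow_le (h : IsInversePositive (s • 1 - U)) (hU : Monotone U)
    (hs : 0 ≤ s) (n : ℕ) : ‖U ^ n‖ ≤ s * ‖Ring.inverse (s • 1 - U)‖ * s ^ n :=
  calc ‖U ^ n‖ ≤ ‖s ^ (n + 1) • Ring.inverse (s • 1 - U)‖ :=
        opNorm_le_opNorm_of_forall_nonneg_le (monotone_pow_clm hU n)
          fun _ hf => h.pow_apply_le hU hs n hf
    _ = s * ‖Ring.inverse (s • 1 - U)‖ * s ^ n := by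
      rw [norm_smul, Real.norm_of_nonneg (pow_nonneg hs _)]
      ring

theorem inv_sub_le_norm_inverse [CompleteSpace E] (hU : Monotone U)
    (hr : Tendsto (fun n : ℕ => ‖U ^ n‖ ^ (1 / (n : ℝ))) atTop (𝓝 r)) (hr0 : 0 < r) (hl : r < l) :
    (l - r)⁻¹ ≤ ‖Ring.inverse (l • 1 - U)‖ := by
  rw [inv_le_iff_one_le_mul₀' (sub_pos.2 hl)]
  by_contra! hlt
  have hlim : Tendsto (fun s => (l - s) * ‖Ring.inverse (l • 1 - U)‖) (𝓝[<] r)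
      (𝓝 ((l - r) * ‖Ring.inverse (l • 1 - U)‖)) :=
    Continuous.continuousWithinAt (by fun_prop)
  obtain ⟨s, hs1, hs0, hsr⟩ :=
    ((hlim.eventually_lt_const hlt).and (Ioo_mem_nhdsLT hr0)).exists
  have hs : IsInversePositive (s • 1 - U) := by
    rw [← sub_sub_cancel l s]
    exact (IsInversePositive.smul_one_sub_of_lt hU hr hl).smul_one_sub_sub
      (sub_nonneg.2 (hsr.trans hl).le) hs1
  exact hsr.not_ge (le_of_tendsto_norm_pow_rpow_of_norm_pow_le hr hs0.le (hs.norm_pow_le hU hs0.le))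

theorem norm_smul_sub_map_normalize_le {F : Type*} [NormedAddCommGroup F] [NormedSpace ℝ F]
    (T : F →L[ℝ] F) {x y : F} (hl : r < l) (hxy : l • x - T x = y) (hy : ‖y‖ ≤ 1)
    (hx : (l - r)⁻¹ / 2 < ‖x‖) :
    ‖r • (‖x‖⁻¹ • x) - T (‖x‖⁻¹ • x)‖ ≤ 3 * (l - r) := by
  have hd : 0 < l - r := sub_pos.2 hl
  have hx0 : 0 < ‖x‖ := (by positivity : 0 < (l - r)⁻¹ / 2).trans hx
  have hinv : ‖x‖⁻¹ ≤ 2 * (l - r) := by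
    simpa only [inv_div, div_inv_eq_mul] using (inv_strictAnti₀ (by positivity) hx).le
  have hnorm : ‖‖x‖⁻¹ • x‖ = 1 := norm_smul_inv_norm (norm_pos_iff.1 hx0)
  have hsplit : r • (‖x‖⁻¹ • x) - T (‖x‖⁻¹ • x) = ‖x‖⁻¹ • y - (l - r) • (‖x‖⁻¹ • x) := by
    rw [← hxy, map_smul]
    module
  calc ‖r • (‖x‖⁻¹ • x) - T (‖x‖⁻¹ • x)‖ ≤ ‖x‖⁻¹ * ‖y‖ + (l - r) * 1 := by
        rw [hsplit]
        refine (norm_sub_le _ _).trans_eq ?_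
        rw [norm_smul, norm_smul (l - r), hnorm, norm_inv, norm_norm, Real.norm_of_nonneg hd.le]
    _ ≤ 2 * (l - r) * 1 + (l - r) * 1 := by gcongr
    _ = 3 * (l - r) := by ring

theorem exists_approx_eigenvector [CompleteSpace E] (hU : Monotone U)
    (hr : Tendsto (fun n : ℕ => ‖U ^ n‖ ^ (1 / (n : ℝ))) atTop (𝓝 r)) (hr0 : 0 < r)
    {ε : ℝ} (hε : 0 < ε) : ∃ f, 0 ≤ f ∧ ‖f‖ = 1 ∧ ‖(r • 1 - U) f‖ ≤ ε := by
  obtain ⟨l, hl, rfl⟩ : ∃ l, r < l ∧ 3 * (l - r) = ε := ⟨r + ε / 3, by linarith, by ring⟩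
  have h := IsInversePositive.smul_one_sub_of_lt hU hr hl
  have hd : 0 < (l - r)⁻¹ := inv_pos.2 (sub_pos.2 hl)
  obtain ⟨g, hg, hg1, hRg⟩ := exists_nonneg_lt_norm_map h.2
    ((half_lt_self hd).trans_le (inv_sub_le_norm_inverse hU hr hr0 hl))
  set x := Ring.inverse (l • 1 - U) g
  have hxg : l • x - U x = g := congrArg (· g) (Ring.mul_inverse_cancel _ h.1)
  exact ⟨‖x‖⁻¹ • x,
    smul_nonneg (inv_nonneg.2 (norm_nonneg x)) ((monotone_iff_map_nonneg _).1 h.2 g hg),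
    norm_smul_inv_norm (norm_pos_iff.1 ((half_pos hd).trans hRg)),
    norm_smul_sub_map_normalize_le U hl hxg hg1 hRg⟩

theorem exists_approx_eigenfunctional [CompleteSpace E] (hU : Monotone U)
    (hr : Tendsto (fun n : ℕ => ‖U ^ n‖ ^ (1 / (n : ℝ))) atTop (𝓝 r)) (hr0 : 0 < r)
    {ε : ℝ} (hε : 0 < ε) :
    ∃ φ : StrongDual ℝ E, Monotone φ ∧ ‖φ‖ = 1 ∧ ‖φ ∘L (r • 1 - U)‖ ≤ ε := by
  obtain ⟨l, hl, rfl⟩ : ∃ l, r < l ∧ 3 * (l - r) = ε := ⟨r + ε / 3, by linarith, by ring⟩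
  have h := IsInversePositive.smul_one_sub_of_lt hU hr hl
  have hd : 0 < (l - r)⁻¹ := inv_pos.2 (sub_pos.2 hl)
  obtain ⟨φ, hφ, hφ1, hφR⟩ := exists_monotone_lt_norm_comp h.2
    ((half_lt_self hd).trans_le (inv_sub_le_norm_inverse hU hr hr0 hl))
  set χ := φ ∘L Ring.inverse (l • 1 - U) with hχ
  have hcomp (c : ℝ) (η : StrongDual ℝ E) : η ∘L (c • 1 - U) = c • η - η ∘L U := by
    ext f
    simp
  have hχφ : l • χ - χ ∘L U = φ := by
    rw [← hcomp, hχ, ContinuousLinearMap.comp_assoc]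
    exact congrArg (φ ∘L ·) (Ring.inverse_mul_cancel _ h.1)
  refine ⟨‖χ‖⁻¹ • χ, (hφ.comp h.2).const_smul (inv_nonneg.2 (norm_nonneg χ)),
    norm_smul_inv_norm (norm_pos_iff.1 ((half_pos hd).trans hφR)), ?_⟩
  rw [hcomp]
  have hprecomp (η : StrongDual ℝ E) : η ∘L U = ContinuousLinearMap.precomp ℝ U η := rfl
  rw [hprecomp] at hχφ ⊢
  exact norm_smul_sub_map_normalize_le _ hl hχφ hφ1 hφR

end Resolvent

section CompactPerturbation

variable {ι 𝕜 F G : Type*}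

theorem exists_tendsto_of_isCompactOperator [NontriviallyNormedField 𝕜]
    [SeminormedAddCommGroup F] [NormedSpace 𝕜 F] [AddCommGroup G] [TopologicalSpace G] [Module 𝕜 G]
    [ContinuousConstSMul 𝕜 G] (𝓤 : Ultrafilter ι) {C : F →ₗ[𝕜] G} (hC : IsCompactOperator C)
    {x : ι → F} {c : ℝ} (hx : ∀ i, ‖x i‖ ≤ c) : ∃ y, Tendsto (fun i => C (x i)) 𝓤 (𝓝 y) := by
  obtain ⟨Q, hQ, hCQ⟩ := hC.image_closedBall_subset_compact c
  have hmem : Q ∈ 𝓤.map fun i => C (x i) :=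
    Ultrafilter.mem_map.2 (univ_mem' fun i => hCQ ⟨x i, by simpa using hx i, rfl⟩)
  obtain ⟨y, -, hy⟩ := hQ.ultrafilter_le_nhds' _ hmem
  exact ⟨y, hy⟩

theorem exists_tendsto_of_mul_eq_one_sub_compact [NontriviallyNormedField 𝕜]
    [SeminormedAddCommGroup F] [NormedSpace 𝕜 F] (𝓤 : Ultrafilter ι) {S T C : F →L[𝕜] F}
    (hST : S * T = 1 - C) (hC : IsCompactOperator C) {x : ι → F} {c : ℝ} (hx : ∀ i, ‖x i‖ ≤ c)
    (hTx : Tendsto (fun i => T (x i)) 𝓤 (𝓝 0)) : ∃ y, Tendsto x 𝓤 (𝓝 y) := by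
  obtain ⟨y, hy⟩ := exists_tendsto_of_isCompactOperator 𝓤 (C := (C : F →ₗ[𝕜] F)) hC hx
  have hSTx : Tendsto (fun i => S (T (x i))) 𝓤 (𝓝 0) := by
    simpa only [map_zero, Function.comp_def] using (S.continuous.tendsto 0).comp hTx
  refine ⟨0 + y, (hSTx.add hy).congr fun i => ?_⟩
  have hdecomp : S (T (x i)) = x i - C (x i) := congrArg (· (x i)) hST
  simp [hdecomp]

theorem exists_strongDual_tendsto_apply [NontriviallyNormedField 𝕜] [ProperSpace 𝕜]
    [SeminormedAddCommGroup F] [NormedSpace 𝕜 F] (𝓤 : Ultrafilter ι) {φ : ι → StrongDual 𝕜 F}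
    {c : ℝ} (hφ : ∀ i, ‖φ i‖ ≤ c) :
    ∃ ψ : StrongDual 𝕜 F, ∀ x, Tendsto (fun i => φ i x) 𝓤 (𝓝 (ψ x)) := by
  have hmem : WeakDual.toStrongDual ⁻¹' Metric.closedBall 0 c ∈
      𝓤.map fun i => StrongDual.toWeakDual (φ i) :=
    Ultrafilter.mem_map.2 (univ_mem' fun i => by simpa using hφ i)
  obtain ⟨ψ, -, hψ⟩ := (WeakDual.isCompact_closedBall 0 c).ultrafilter_le_nhds' _ hmem
  exact ⟨WeakDual.toStrongDual ψ,
    tendsto_iff_forall_eval_tendsto_topDualPairing.1 hψ⟩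

theorem tendsto_apply_of_tendsto_of_norm_le [NontriviallyNormedField 𝕜]
    [SeminormedAddCommGroup F] [NormedSpace 𝕜 F] [SeminormedAddCommGroup G] [NormedSpace 𝕜 G]
    {𝓕 : Filter ι} {T : ι → F →L[𝕜] G} {c : ℝ} (hT : ∀ i, ‖T i‖ ≤ c) {x : ι → F} {y : F} {z : G}
    (hx : Tendsto x 𝓕 (𝓝 y)) (hz : Tendsto (fun i => T i y) 𝓕 (𝓝 z)) :
    Tendsto (fun i => T i (x i)) 𝓕 (𝓝 z) := by
  have hdiff : Tendsto (fun i => T i (x i - y)) 𝓕 (𝓝 0) := by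
    refine squeeze_zero_norm (fun i => (T i).le_of_opNorm_le (hT i) _) ?_
    simpa only [mul_zero] using (tendsto_iff_norm_sub_tendsto_zero.1 hx).const_mul c
  simpa using hdiff.add hz

theorem ne_zero_of_mul_eq_one_sub_compact [DenselyNormedField 𝕜] [NormedAddCommGroup F]
    [NormedSpace 𝕜 F] (𝓤 : Ultrafilter ι) {S T C : F →L[𝕜] F}
    (hTS : T * S = 1 - C) (hC : IsCompactOperator C) {φ : ι → StrongDual 𝕜 F}
    {ψ : StrongDual 𝕜 F} (hφ : ∀ i, ‖φ i‖ = 1)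
    (hφT : Tendsto (fun i => ‖φ i ∘L T‖) 𝓤 (𝓝 0))
    (hψ : ∀ x, Tendsto (fun i => φ i x) 𝓤 (𝓝 (ψ x))) : ψ ≠ 0 := by
  rintro rfl
  choose x hx1 hφx using fun i => (φ i).exists_lt_apply_of_lt_opNorm
    (one_half_lt_one.trans_eq (hφ i).symm)
  obtain ⟨y, hy⟩ := exists_tendsto_of_isCompactOperator 𝓤 (C := (C : F →ₗ[𝕜] F)) hC
    fun i => (hx1 i).le
  have hφC : Tendsto (fun i => φ i (C (x i))) 𝓤 (𝓝 0) :=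
    tendsto_apply_of_tendsto_of_norm_le (fun i => (hφ i).le) hy (hψ y)
  have hφTS : Tendsto (fun i => φ i (T (S (x i)))) 𝓤 (𝓝 0) := by
    refine squeeze_zero_norm (a := fun i => ‖φ i ∘L T‖ * ‖S‖) (fun i => ?_) ?_
    · exact (φ i ∘L T).le_of_opNorm_le_of_le le_rfl (S.unit_le_opNorm _ (hx1 i).le)
    · simpa only [zero_mul] using hφT.mul_const ‖S‖
  have hφx0 : Tendsto (fun i => φ i (x i)) 𝓤 (𝓝 0) := by
    rw [← add_zero 0]
    refine (hφTS.add hφC).congr fun i => ?_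
    have hdecomp : T (S (x i)) = x i - C (x i) := congrArg (· (x i)) hTS
    rw [hdecomp, ← map_add, sub_add_cancel]
  have hhalf : (1 / 2 : ℝ) ≤ 0 := by
    simpa only [norm_zero] using ge_of_tendsto' hφx0.norm fun i => (hφx i).le
  norm_num at hhalf

theorem exists_parametrix_sub {R : Type*} [Ring R] {D : R} (hD : IsUnit D) (K : R) (m : ℕ) :
    ∃ S, S * (D - K) = 1 - Ring.inverse D * (K * Ring.inverse D) ^ m * D ∧
      (D - K) * S = 1 - (K * Ring.inverse D) ^ m := by
  set B := Ring.inverse D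
  have hBD : B * D = 1 := Ring.inverse_mul_cancel _ hD
  have hDB : D * B = 1 := Ring.mul_inverse_cancel _ hD
  have hleft : D - K = (1 - K * B) * D := by
    rw [sub_mul, one_mul, mul_assoc, hBD, mul_one]
  have hright : (D - K) * B = 1 - K * B := by rw [sub_mul, hDB]
  refine ⟨B * ∑ i ∈ Finset.range m, (K * B) ^ i, ?_, ?_⟩
  · rw [hleft, mul_assoc B, ← mul_assoc _ (1 - K * B), geom_sum_mul_neg, sub_mul, one_mul, mul_sub,
      hBD, mul_assoc B]
  · rw [← mul_assoc, hright, mul_neg_geom_sum]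

end CompactPerturbation

section Eigenelements

variable {E : Type*} [NormedAddCommGroup E] [Lattice E] [HasSolidNorm E] [IsOrderedAddMonoid E]
  [NormedSpace ℝ E] [IsOrderedModule ℝ E] [CompleteSpace E] {U S C : E →L[ℝ] E} {r : ℝ}

theorem exists_nonneg_eigenvector (hU : Monotone U)
    (hr : Tendsto (fun n : ℕ => ‖U ^ n‖ ^ (1 / (n : ℝ))) atTop (𝓝 r)) (hr0 : 0 < r)
    (hS : S * (r • 1 - U) = 1 - C) (hC : IsCompactOperator C) :
    ∃ f : E, 0 ≤ f ∧ f ≠ 0 ∧ U f = r • f := by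
  choose f hf hf1 hUf using fun n : ℕ =>
    exists_approx_eigenvector hU hr hr0 (Nat.one_div_pos_of_nat (α := ℝ) (n := n))
  have hε := (tendsto_one_div_add_atTop_nhds_zero_nat (𝕜 := ℝ)).mono_left
    Nat.hyperfilter_le_atTop
  have hUf0 : Tendsto (fun n => (r • 1 - U) (f n)) (hyperfilter ℕ) (𝓝 0) := squeeze_zero_norm hUf hε
  obtain ⟨g, hg⟩ := exists_tendsto_of_mul_eq_one_sub_compact _ hS hC (fun n => (hf1 n).le) hUf0
  have hg1 : ‖g‖ = 1 := tendsto_nhds_unique hg.norm (by simp only [hf1, tendsto_const_nhds])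
  have hUg : (r • 1 - U) g = 0 :=
    tendsto_nhds_unique (((r • 1 - U).continuous.tendsto g).comp hg) hUf0
  exact ⟨g, ge_of_tendsto' hg hf, norm_ne_zero_iff.1 (hg1.trans_ne one_ne_zero),
    (sub_eq_zero.1 hUg).symm⟩

theorem exists_monotone_eigenfunctional (hU : Monotone U)
    (hr : Tendsto (fun n : ℕ => ‖U ^ n‖ ^ (1 / (n : ℝ))) atTop (𝓝 r)) (hr0 : 0 < r)
    (hS : (r • 1 - U) * S = 1 - C) (hC : IsCompactOperator C) :
    ∃ φ : StrongDual ℝ E, Monotone φ ∧ φ ≠ 0 ∧ ∀ f, φ (U f) = r * φ f := by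
  choose φ hφ hφ1 hφU using fun n : ℕ =>
    exists_approx_eigenfunctional hU hr hr0 (Nat.one_div_pos_of_nat (α := ℝ) (n := n))
  have hε := (tendsto_one_div_add_atTop_nhds_zero_nat (𝕜 := ℝ)).mono_left
    Nat.hyperfilter_le_atTop
  have hφU0 : Tendsto (fun n => ‖φ n ∘L (r • 1 - U)‖) (hyperfilter ℕ) (𝓝 0) :=
    squeeze_zero (fun n => norm_nonneg _) hφU hε
  obtain ⟨ψ, hψ⟩ := exists_strongDual_tendsto_apply (hyperfilter ℕ) fun n => (hφ1 n).le
  refine ⟨ψ, fun f g hfg => le_of_tendsto_of_tendsto' (hψ f) (hψ g) fun n => hφ n hfg,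
    ne_zero_of_mul_eq_one_sub_compact _ hS hC hφ1 hφU0 hψ, fun f => ?_⟩
  have hlim : Tendsto (fun n => φ n ((r • 1 - U) f)) (hyperfilter ℕ) (𝓝 0) := by
    refine squeeze_zero_norm (fun n => (φ n ∘L (r • 1 - U)).le_opNorm f) ?_
    simpa only [zero_mul] using hφU0.mul_const ‖f‖
  have hψf : ψ (r • f - U f) = 0 := tendsto_nhds_unique (hψ _) hlim
  rw [map_sub, map_smul, smul_eq_mul] at hψf
  exact (sub_eq_zero.1 hψf).symm

end Eigenelements

theorem floquet_existence_eigenelements_general {E : Type*} [NormedAddCommGroup E] [Lattice E]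
    [HasSolidNorm E] [IsOrderedAddMonoid E] [NormedSpace ℝ E] [IsOrderedModule ℝ E]
    [CompleteSpace E] (U W K : E →L[ℝ] E) (hpos : ∀ f, 0 ≤ f → 0 ≤ U f)
    (r : ℝ) (hr : Tendsto (fun n : ℕ => ‖U ^ n‖ ^ (1 / (n : ℝ))) atTop (𝓝 r))
    (hr0 : 0 < r) (hsplit : U = W + K) (hunit : IsUnit (r • (1 : E →L[ℝ] E) - W)) (m : ℕ)
    (hcomp : IsCompactOperator ⇑((K * Ring.inverse (r • (1 : E →L[ℝ] E) - W)) ^ m)) :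
    (∃ f₀ : E, 0 ≤ f₀ ∧ f₀ ≠ 0 ∧ U f₀ = r • f₀) ∧
    (∃ φ₀ : E →L[ℝ] ℝ, (∀ f, 0 ≤ f → 0 ≤ φ₀ f) ∧ φ₀ ≠ 0 ∧ ∀ f, φ₀ (U f) = r * φ₀ f) := by
  have hU : Monotone U := (monotone_iff_map_nonneg U).2 hpos
  obtain ⟨S, hleft, hright⟩ := exists_parametrix_sub hunit K m
  rw [sub_sub, ← hsplit] at hleft hright
  obtain ⟨φ, hφ, hφ0, hφU⟩ := exists_monotone_eigenfunctional hU hr hr0 hright hcomp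
  exact ⟨exists_nonneg_eigenvector hU hr hr0 hleft ((hcomp.clm_comp _).comp_clm _),
    φ, (monotone_iff_map_nonneg φ).1 hφ, hφ0, hφU⟩

theorem isUnit_smul_one_sub_of_norm_lt {F : Type*} [NormedAddCommGroup F] [NormedSpace ℝ F]
    [CompleteSpace F] {W : F →L[ℝ] F} {r : ℝ} (hW : ‖W‖ < r) : IsUnit (r • 1 - W) := by
  rw [← Algebra.algebraMap_eq_smul_one]
  refine spectrum.mem_resolventSet_of_norm_lt_mul ?_
  calc ‖W‖ * ‖(1 : F →L[ℝ] F)‖ ≤ ‖W‖ :=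
        mul_le_of_le_one_right (norm_nonneg W) ContinuousLinearMap.norm_id_le
    _ < ‖r‖ := hW.trans_le (Real.le_norm_self r)

instance instIsOrderedModuleRealLp {α : Type*} [MeasurableSpace α] {μ : Measure α} {p : ℝ≥0∞} :
    IsOrderedModule ℝ (Lp ℝ p μ) := by
  refine IsOrderedModule.of_smul_nonneg fun c hc f hf => ?_
  rw [← Lp.coeFn_nonneg] at hf ⊢
  filter_upwards [hf, Lp.coeFn_smul c f] with x hfx hcfx
  rw [hcfx]
  exact mul_nonneg hc hfx

/-- **Theorem 2.1 i).** Let `U` be a positive bounded linear operator on `X = L^p(E, μ)`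
with spectral radius `r(U) > 0` (characterized via the Gelfand formula
`r(U) = lim ‖Uⁿ‖^(1/n)`), admitting a splitting `U = W + K` with `‖W‖ < r(U)` and
`K (λ - W)⁻¹` power compact for every real `λ > ‖W‖`.  Then there exist a nonzero
nonnegative `f₀ ∈ X` and a nonzero nonnegative continuous linear functional `φ₀` such that
`U f₀ = r(U) f₀` and `U* φ₀ = r(U) φ₀`. -/
theorem floquet_existence_eigenelements
    {α : Type*} [MeasurableSpace α] {μ : Measure α} [SigmaFinite μ]
    {p : ℝ≥0∞} [Fact (1 ≤ p)] (hp : p ≠ ∞)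
    (U W K : Lp ℝ p μ →L[ℝ] Lp ℝ p μ)
    (hpos : ∀ f : Lp ℝ p μ, 0 ≤ f → 0 ≤ U f)
    (r : ℝ) (hr : Tendsto (fun n : ℕ => ‖U ^ n‖ ^ (1 / (n : ℝ))) atTop (nhds r))
    (hr0 : 0 < r) (hsplit : U = W + K) (hW : ‖W‖ < r)
    (hcomp : ∀ lam : ℝ, ‖W‖ < lam → ∃ n : ℕ, 0 < n ∧
      IsCompactOperator ⇑((K * Ring.inverse (lam • (1 : Lp ℝ p μ →L[ℝ] Lp ℝ p μ) - W)) ^ n)) :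
    (∃ f₀ : Lp ℝ p μ, 0 ≤ f₀ ∧ f₀ ≠ 0 ∧ U f₀ = r • f₀) ∧
    (∃ φ₀ : Lp ℝ p μ →L[ℝ] ℝ, (∀ f, 0 ≤ f → 0 ≤ φ₀ f) ∧ φ₀ ≠ 0 ∧
      ∀ f, φ₀ (U f) = r * φ₀ f) := by
  obtain ⟨m, -, hm⟩ := hcomp r hW
  exact floquet_existence_eigenelements_general U W K hpos r hr hr0 hsplit
    (isUnit_smul_one_sub_of_norm_lt hW) m hm
end

section
/- Let U be a positive bounded linear operator on the complex space X_ℂ = L^p(E, μ; ℂ) with spectral radius r(U) > 0, and assume U admits a splitting U = W + K with bounded linear operators W and K such that ‖W‖ < r(U) and K(λ − W)⁻¹ is power compact for every λ ∈ ℂ with |λ| > ‖W‖. Then for every κ with ‖W‖ < κ < r(U), the set σ(U) ∩ {z ∈ ℂ : |z| ≥ κ} is finite and is contained in the point spectrum σ_p(U) (i.e., it consists of eigenvalues of U). -/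
open MeasureTheory Filter ENNReal

/-!
Write `π` for the projection onto the Calkin algebra. From
`λ - (W + K) = (1 - K (λ - W)⁻¹) (λ - W)` and the nilpotency of `π (K (λ - W)⁻¹)` for
`‖W‖ < |λ|`, the spectral radius of `π U` is at most `‖W‖`.

Let `κ` exceed the spectral radius of `π U`. Gelfand's formula gives `U ^ n = S + Q` with `Q`
compact and `4 ‖S‖ < κ ^ n`. A spectral value `w` of `S + Q` with `κ ^ n ≤ |w|` is an eigenvalue
by the Fredholm alternative, and infinitely many of them would, by Riesz's lemma applied to the
flag spanned by the eigenvectors, give a bounded sequence along which `Q` has no convergent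
subsequence. Hence `σ(U) ∩ {κ ≤ |z|}` is finite, as `z ↦ z ^ n` maps it into a finite set.

Each such `z` is therefore a limit of points of the resolvent set. As `z - U` has a left inverse
modulo compact operators, it is bounded below unless `z` is an eigenvalue; but an operator that is
bounded below and a limit of invertible operators is itself invertible.
-/

open Topology Module.End

theorem norm_mul_le_of_quotient {R : Type*} [SeminormedRing R] (I : Ideal R) [I.IsTwoSided]
    (x y : R ⧸ I) : ‖x * y‖ ≤ ‖x‖ * ‖y‖ := by
  refine le_mul_of_forall_lt₀ fun s hs t ht => ?_
  obtain ⟨a, rfl, ha⟩ := Submodule.Quotient.norm_mk_lt x (sub_pos.mpr hs)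
  obtain ⟨b, rfl, hb⟩ := Submodule.Quotient.norm_mk_lt y (sub_pos.mpr ht)
  rw [add_sub_cancel] at ha hb
  calc ‖(Submodule.Quotient.mk (a * b) : R ⧸ I)‖ ≤ ‖a * b‖ := Submodule.Quotient.norm_mk_le I _
    _ ≤ ‖a‖ * ‖b‖ := norm_mul_le a b
    _ ≤ s * t := mul_le_mul ha.le hb.le (norm_nonneg b) ((norm_nonneg a).trans ha.le)

section Calkin

variable (𝕜 X : Type*) [NontriviallyNormedField 𝕜] [NormedAddCommGroup X] [NormedSpace 𝕜 X]

/-- The two-sided ideal of compact operators in the ring of bounded operators on `X`. -/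
def compactIdeal : Ideal (X →L[𝕜] X) where
  __ := (compactOperator (RingHom.id 𝕜) X X).toAddSubmonoid
  smul_mem' A _ hT := IsCompactOperator.clm_comp hT A

instance : (compactIdeal 𝕜 X).IsTwoSided :=
  ⟨fun A hT => IsCompactOperator.comp_clm hT A⟩

instance [CompleteSpace X] : IsClosed (compactIdeal 𝕜 X : Set (X →L[𝕜] X)) :=
  isClosed_setOfPred_isCompactOperator

/-- The Calkin algebra of `X`: bounded operators modulo compact operators. -/
abbrev CalkinAlgebra : Type _ := (X →L[𝕜] X) ⧸ compactIdeal 𝕜 X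

noncomputable instance [CompleteSpace X] : NormedRing (CalkinAlgebra 𝕜 X) where
  __ := Ideal.Quotient.ring (compactIdeal 𝕜 X)
  __ := Submodule.Quotient.normedAddCommGroup (compactIdeal 𝕜 X)
  norm_mul_le := norm_mul_le_of_quotient (compactIdeal 𝕜 X)

noncomputable instance [CompleteSpace X] : NormedAlgebra 𝕜 (CalkinAlgebra 𝕜 X) where
  __ := Ideal.Quotient.algebra 𝕜
  norm_smul_le := norm_smul_le

variable {X}

/-- The class of a bounded operator in the Calkin algebra. -/
def toCalkin : (X →L[𝕜] X) →ₐ[𝕜] CalkinAlgebra 𝕜 X := Ideal.Quotient.mkₐ 𝕜 (compactIdeal 𝕜 X)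

variable {𝕜}

theorem toCalkin_eq_iff {S T : X →L[𝕜] X} :
    toCalkin 𝕜 S = toCalkin 𝕜 T ↔ IsCompactOperator (S - T) :=
  Ideal.Quotient.eq

theorem toCalkin_eq_zero_iff {T : X →L[𝕜] X} : toCalkin 𝕜 T = 0 ↔ IsCompactOperator T :=
  Ideal.Quotient.eq_zero_iff_mem

theorem exists_norm_lt_isCompactOperator_sub {T : X →L[𝕜] X} {c : ℝ} (h : ‖toCalkin 𝕜 T‖ < c) :
    ∃ S : X →L[𝕜] X, ‖S‖ < c ∧ IsCompactOperator (T - S) := by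
  obtain ⟨S, hST, hS⟩ := Submodule.Quotient.norm_mk_lt (toCalkin 𝕜 T) (sub_pos.mpr h)
  exact ⟨S, by rwa [add_sub_cancel] at hS, toCalkin_eq_iff.mp hST.symm⟩

theorem exists_isCompactOperator_one_sub_mul {z : 𝕜} {U : X →L[𝕜] X}
    (hz : z ∈ resolventSet 𝕜 (toCalkin 𝕜 U)) :
    ∃ B : X →L[𝕜] X, IsCompactOperator (1 - B * (algebraMap 𝕜 _ z - U) : X →L[𝕜] X) := by
  obtain ⟨b, hb⟩ := (spectrum.mem_resolventSet_iff.mp hz).exists_left_inv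
  obtain ⟨B, rfl⟩ := Ideal.Quotient.mkₐ_surjective 𝕜 (compactIdeal 𝕜 X) b
  refine ⟨B, toCalkin_eq_iff.mp ?_⟩
  rw [map_one, map_mul, map_sub, AlgHom.commutes]
  exact hb.symm

theorem mem_resolventSet_toCalkin_add {z : 𝕜} {W K : X →L[𝕜] X} {n : ℕ}
    (hz : z ∈ resolventSet 𝕜 W) (hK : IsCompactOperator ⇑((K * resolvent W z) ^ n)) :
    z ∈ resolventSet 𝕜 (toCalkin 𝕜 (W + K)) := by
  have hfactor : algebraMap 𝕜 _ z - (W + K) =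
      (1 - K * resolvent W z) * (algebraMap 𝕜 _ z - W) := by
    rw [sub_mul, mul_assoc, resolvent, Ring.inverse_mul_cancel _ hz, one_mul, mul_one, sub_sub]
  have hnilpotent : IsNilpotent (toCalkin 𝕜 (K * resolvent W z)) :=
    ⟨n, by rw [← map_pow, toCalkin_eq_zero_iff.mpr hK]⟩
  rw [spectrum.mem_resolventSet_iff, ← (toCalkin 𝕜).commutes, ← map_sub, hfactor, map_mul,
    map_sub, map_one]
  exact hnilpotent.isUnit_one_sub.mul (hz.map (toCalkin 𝕜))

end Calkin

theorem exists_const_mul_norm_pow_lt_pow {A : Type*} [NormedRing A] [NormedAlgebra ℂ A]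
    [CompleteSpace A] {a : A} {ρ : NNReal} (h : spectralRadius ℂ a < ρ) (C : ℝ) :
    ∃ n ≠ 0, C * ‖a ^ n‖ < (ρ : ℝ) ^ n := by
  obtain ⟨s, has, hsρ⟩ := ENNReal.lt_iff_exists_nnreal_btwn.mp h
  rw [ENNReal.coe_lt_coe] at hsρ
  have hpow : ∀ᶠ n : ℕ in atTop, ‖a ^ n‖ ≤ (s : ℝ) ^ n := by
    filter_upwards [(spectrum.gelfand_formula a).eventually_lt_const has, eventually_gt_atTop 0]
      with n hn hn0
    rw [one_div, ENNReal.rpow_inv_lt_iff (by positivity), ENNReal.rpow_natCast] at hn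
    exact_mod_cast hn.le
  have hρ : (0 : ℝ) < ρ := s.coe_nonneg.trans_lt hsρ
  have hratio : Tendsto (fun n : ℕ => |C| * ((s : ℝ) / ρ) ^ n) atTop (𝓝 0) := by
    simpa only [mul_zero] using (_root_.tendsto_pow_atTop_nhds_zero_of_lt_one
      (div_nonneg s.coe_nonneg hρ.le)
      ((div_lt_one hρ).mpr hsρ)).const_mul |C|
  obtain ⟨n, hn, hsmall, hn0⟩ :=
    (hpow.and ((hratio.eventually_lt_const one_pos).and (eventually_ne_atTop 0))).exists
  refine ⟨n, hn0, ?_⟩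
  rw [div_pow, ← mul_div_assoc, div_lt_one (by positivity)] at hsmall
  calc C * ‖a ^ n‖ ≤ |C| * (s : ℝ) ^ n := by gcongr; exact le_abs_self C
    _ < ρ ^ n := hsmall

section CompactPerturbation

variable {𝕜 X : Type*} [NontriviallyNormedField 𝕜] [NormedAddCommGroup X] [NormedSpace 𝕜 X]

theorem exists_subseq_tendsto_of_isCompactOperator {Q : X →L[𝕜] X} (hQ : IsCompactOperator Q)
    {r : ℝ} {y : ℕ → X} (hy : ∀ n, ‖y n‖ ≤ r) :
    ∃ (a : X) (φ : ℕ → ℕ), StrictMono φ ∧ Tendsto (fun n => Q (y (φ n))) atTop (𝓝 a) := by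
  obtain ⟨s, hs, hQs⟩ :=
    IsCompactOperator.image_closedBall_subset_compact (f := (Q : X →ₗ[𝕜] X)) hQ r
  obtain ⟨a, -, φ, hφ, ha⟩ :=
    hs.tendsto_subseq fun n => hQs ⟨y n, mem_closedBall_zero_iff.mpr (hy n), rfl⟩
  exact ⟨a, φ, hφ, ha⟩

theorem hasEigenvalue_of_algebraMap_sub_apply_eq_zero {U : X →L[𝕜] X} {z : 𝕜} {f : X} (hf : f ≠ 0)
    (h : (algebraMap 𝕜 _ z - U : X →L[𝕜] X) f = 0) : HasEigenvalue U.toLinearMap z :=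
  hasEigenvalue_of_hasEigenvector
    (hasEigenvector_iff.mpr ⟨mem_eigenspace_iff.mpr (sub_eq_zero.mp h).symm, hf⟩)

theorem hasEigenvalue_add_of_isCompactOperator [CompleteSpace X] {S Q : X →L[𝕜] X}
    (hQ : IsCompactOperator Q) {w : 𝕜} (hwS : w ∈ resolventSet 𝕜 S)
    (hw : w ∈ spectrum 𝕜 (S + Q)) : HasEigenvalue (S + Q : X →L[𝕜] X).toLinearMap w := by
  obtain ⟨V, hV⟩ := spectrum.mem_resolventSet_iff.mp hwS
  have hfactor : algebraMap 𝕜 _ w - (S + Q) = ↑V * (1 - ↑V⁻¹ * Q) := by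
    rw [mul_sub, mul_one, V.mul_inv_cancel_left, hV, sub_sub]
  have hcompact : IsCompactOperator (↑V⁻¹ * Q : X →L[𝕜] X) := hQ.clm_comp _
  rcases hcompact.hasEigenvalue_or_mem_resolventSet one_ne_zero with h | h
  · obtain ⟨f, hf⟩ := h.exists_hasEigenvector
    have hfix : (1 - ↑V⁻¹ * Q : X →L[𝕜] X) f = 0 :=
      sub_eq_zero.mpr (hf.apply_eq_smul.trans (one_smul 𝕜 f)).symm
    refine hasEigenvalue_of_algebraMap_sub_apply_eq_zero hf.2 ?_
    rw [hfactor, mul_apply_eq_comp, hfix, map_zero]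
  · rw [spectrum.mem_resolventSet_iff, map_one] at h
    refine absurd ?_ hw
    rw [spectrum.mem_resolventSet_iff, hfactor]
    exact V.isUnit.mul h

theorem isUnit_of_antilipschitzWith_of_mem_closure [CompleteSpace X] {A : X →L[𝕜] X}
    {c : NNReal} (hc : AntilipschitzWith c A) (hA : A ∈ closure {T | IsUnit T}) : IsUnit A := by
  obtain ⟨_, ⟨V, rfl⟩, hV⟩ := Metric.mem_closure_iff.mp hA (1 / (2 * ((c : ℝ) + 1))) (by positivity)
  have hsmall : c * ‖A - V‖ < 1 / 2 := by
    rw [dist_eq_norm, lt_div_iff₀ (by positivity)] at hV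
    nlinarith [norm_nonneg (A - V)]
  have hinv : ‖(↑V⁻¹ : X →L[𝕜] X)‖ ≤ 2 * c := by
    refine ContinuousLinearMap.opNorm_le_bound _ (by positivity) fun x => ?_
    set u := (↑V⁻¹ : X →L[𝕜] X) x
    have hVu : (V : X →L[𝕜] X) u = x := by
      rw [← mul_apply_eq_comp, V.mul_inv, one_apply_eq_self]
    have hu : ‖u‖ ≤ c * ‖x‖ + 1 / 2 * ‖u‖ :=
      calc ‖u‖ ≤ c * ‖A u‖ := hc.le_mul_norm (map_zero A) u
        _ = c * ‖x + (A - V) u‖ := by rw [sub_apply, hVu, add_sub_cancel]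
        _ ≤ c * (‖x‖ + ‖A - V‖ * ‖u‖) := by grw [norm_add_le, (A - V).le_opNorm]
        _ = c * ‖x‖ + c * ‖A - V‖ * ‖u‖ := by ring
        _ ≤ c * ‖x‖ + 1 / 2 * ‖u‖ := by gcongr
    linarith
  have hfactor : A = V * (1 - ↑V⁻¹ * (V - A)) := by
    rw [mul_sub, mul_one, V.mul_inv_cancel_left]
    abel
  rw [hfactor]
  refine V.isUnit.mul (isUnit_one_sub_of_norm_lt_one ?_)
  grw [norm_mul_le, hinv, norm_sub_rev]
  linarith

end CompactPerturbation

section Eigenvalues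

variable {𝕜 X : Type*} [RCLike 𝕜] [NormedAddCommGroup X] [NormedSpace 𝕜 X]

theorem exists_antilipschitzWith_of_isCompactOperator_one_sub_mul {A B : X →L[𝕜] X}
    (hBA : IsCompactOperator (1 - B * A : X →L[𝕜] X)) (hA : Function.Injective A) :
    ∃ c, AntilipschitzWith c A := by
  rw [antilipschitzWith_iff_exists_mul_le_norm]
  by_contra! hunbounded
  have happrox : ∀ n : ℕ, ∃ x : X, ‖x‖ = 1 ∧ ‖A x‖ ≤ 1 / ((n : ℝ) + 1) := by
    intro n
    obtain ⟨x, hx⟩ := hunbounded (1 / ((n : ℝ) + 1)) (by positivity)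
    have hx0 : x ≠ 0 := by rintro rfl; simp at hx
    refine ⟨((‖x‖⁻¹ : ℝ) : 𝕜) • x, by simp [norm_smul, hx0], ?_⟩
    rw [map_smul, norm_smul, RCLike.norm_ofReal, abs_of_nonneg (by positivity),
      inv_mul_le_iff₀ (norm_pos_iff.mpr hx0), mul_comm]
    exact hx.le
  choose x hx1 hxA using happrox
  have hAx : Tendsto (fun n => A (x n)) atTop (𝓝 0) :=
    squeeze_zero_norm hxA tendsto_one_div_add_atTop_nhds_zero_nat
  obtain ⟨a, φ, hφ, ha⟩ := exists_subseq_tendsto_of_isCompactOperator hBA fun n => (hx1 n).le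
  have hAφ := hAx.comp hφ.tendsto_atTop
  have hBAφ : Tendsto (fun n => B (A (x (φ n)))) atTop (𝓝 0) :=
    map_zero B ▸ (B.continuous.tendsto 0).comp hAφ
  have hxφ : Tendsto (fun n => x (φ n)) atTop (𝓝 a) := by simpa using ha.add hBAφ
  have ha0 : a = 0 := hA <| by
    rw [map_zero]
    exact tendsto_nhds_unique ((A.continuous.tendsto a).comp hxφ) hAφ
  have ha1 : ‖a‖ = 1 :=
    tendsto_nhds_unique hxφ.norm (by simp only [hx1]; exact tendsto_const_nhds)
  simp [ha0] at ha1

theorem hasEigenvalue_of_mem_closure_resolventSet [CompleteSpace X] {U : X →L[𝕜] X} {z : 𝕜}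
    (hz : z ∈ spectrum 𝕜 U) (hcalkin : z ∈ resolventSet 𝕜 (toCalkin 𝕜 U))
    (hcl : z ∈ closure (resolventSet 𝕜 U)) : HasEigenvalue U.toLinearMap z := by
  by_contra heig
  obtain ⟨B, hB⟩ := exists_isCompactOperator_one_sub_mul hcalkin
  have hinj : Function.Injective (algebraMap 𝕜 _ z - U : X →L[𝕜] X) := by
    rw [injective_iff_map_eq_zero]
    intro f hf
    by_contra hf0
    exact heig (hasEigenvalue_of_algebraMap_sub_apply_eq_zero hf0 hf)
  obtain ⟨c, hc⟩ := exists_antilipschitzWith_of_isCompactOperator_one_sub_mul hB hinj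
  have hlimit : algebraMap 𝕜 _ z - U ∈ closure {T : X →L[𝕜] X | IsUnit T} :=
    map_mem_closure (f := fun w => algebraMap 𝕜 (X →L[𝕜] X) w - U) (by fun_prop) hcl fun _ hw => hw
  exact hz (isUnit_of_antilipschitzWith_of_mem_closure hc hlimit)

theorem exists_norm_eq_one_le_norm_sub_of_lt {Y Z : Submodule 𝕜 X} (hY : IsClosed (Y : Set X))
    (hYZ : Y < Z) {r : ℝ} (hr : r < 1) : ∃ y ∈ Z, ‖y‖ = 1 ∧ ∀ w ∈ Y, r ≤ ‖y - w‖ := by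
  obtain ⟨hle, x, hxZ, hxY⟩ := SetLike.lt_iff_le_and_exists.mp hYZ
  have hclosed : IsClosed (Y.comap Z.subtype : Set Z) := hY.preimage continuous_subtype_val
  obtain ⟨y, -, hy, hdist⟩ := riesz_lemma_of_lt_one hclosed ⟨⟨x, hxZ⟩, hxY⟩ hr
  exact ⟨y, y.2, hy, fun w hw => hdist ⟨w, hle hw⟩ hw⟩

theorem map_sub_smul_mem_span_image_Iio {R M : Type*} [CommRing R] [AddCommGroup M] [Module R M]
    {T : M →ₗ[R] M} {l : ℕ → R} {x : ℕ → M} (hx : ∀ n, T (x n) = l n • x n) {n : ℕ} {y : M}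
    (hy : y ∈ Submodule.span R (x '' Set.Iio (n + 1))) :
    T y - l n • y ∈ Submodule.span R (x '' Set.Iio n) := by
  suffices Submodule.span R (x '' Set.Iio (n + 1)) ≤
      (Submodule.span R (x '' Set.Iio n)).comap (T - l n • LinearMap.id) from this hy
  rw [Submodule.span_le]
  rintro _ ⟨k, hk, rfl⟩
  change T (x k) - l n • x k ∈ Submodule.span R (x '' Set.Iio n)
  rw [hx, ← sub_smul]
  rcases (Nat.lt_succ_iff_lt_or_eq.mp hk) with hkn | rfl
  · exact Submodule.smul_mem _ _ (Submodule.subset_span ⟨k, hkn, rfl⟩)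
  · rw [sub_self, zero_smul]
    exact Submodule.zero_mem _

theorem exists_seq_norm_eigenvalue_le_norm_map_sub (T : X →ₗ[𝕜] X) {l : ℕ → 𝕜}
    (hl : Function.Injective l) (hT : ∀ n, HasEigenvalue T (l n)) :
    ∃ y : ℕ → X, (∀ n, ‖y n‖ = 1) ∧ ∀ m n, m < n → ‖l n‖ / 2 ≤ ‖T (y n) - T (y m)‖ := by
  choose x hx using fun n => (hT n).exists_hasEigenvector
  have hli : LinearIndependent 𝕜 x := eigenvectors_linearIndependent' T l hl x hx
  let Y : ℕ → Submodule 𝕜 X := fun n => Submodule.span 𝕜 (x '' Set.Iio n)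
  have hYmono : StrictMono Y := by
    refine strictMono_nat_of_lt_succ fun n => SetLike.lt_iff_le_and_exists.mpr
      ⟨Submodule.span_mono (by gcongr; exact n.le_succ), x n, ?_, hli.notMem_span_image ?_⟩
    · exact Submodule.subset_span ⟨n, n.lt_succ_self, rfl⟩
    · exact Set.self_notMem_Iio
  have hYclosed : ∀ n, IsClosed (Y n : Set X) := fun n =>
    have := FiniteDimensional.span_of_finite 𝕜 ((Set.finite_Iio n).image x)
    (Y n).closed_of_finiteDimensional
  have hTY : ∀ n, ∀ v ∈ Y (n + 1), T v - l n • v ∈ Y n := fun n v hv =>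
    map_sub_smul_mem_span_image_Iio (fun k => (hx k).apply_eq_smul) hv
  choose y hyY hy1 hydist using fun n =>
    exists_norm_eq_one_le_norm_sub_of_lt (hYclosed n) (hYmono n.lt_succ_self) one_half_lt_one
  refine ⟨y, hy1, fun m n hmn => ?_⟩
  rcases eq_or_ne (l n) 0 with hl0 | hl0
  · simp [hl0]
  have hymY : y m ∈ Y n := hYmono.monotone hmn (hyY m)
  have hTymY : T (y m) ∈ Y n := by
    have := (Y n).add_mem (hTY n _ (hYmono.monotone n.le_succ hymY)) ((Y n).smul_mem (l n) hymY)
    rwa [sub_add_cancel] at this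
  have hw := (Y n).smul_mem (l n)⁻¹ ((Y n).sub_mem hTymY (hTY n _ (hyY n)))
  calc ‖l n‖ / 2 = ‖l n‖ * (1 / 2) := by ring
    _ ≤ ‖l n‖ * ‖y n - (l n)⁻¹ • (T (y m) - (T (y n) - l n • y n))‖ := by
      gcongr
      exact hydist n _ hw
    _ = ‖T (y n) - T (y m)‖ := by
      rw [← norm_smul, smul_sub, smul_inv_smul₀ hl0]
      congr 1
      abel

theorem finite_setOf_hasEigenvalue_add {S Q : X →L[𝕜] X} (hQ : IsCompactOperator Q) {c : ℝ}
    (hc : 4 * ‖S‖ < c) : {w : 𝕜 | c ≤ ‖w‖ ∧ HasEigenvalue (S + Q).toLinearMap w}.Finite := by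
  by_contra hinf
  let l := Set.Infinite.natEmbedding _ hinf
  obtain ⟨y, hy, hsep⟩ := exists_seq_norm_eigenvalue_le_norm_map_sub (S + Q).toLinearMap
    (Subtype.val_injective.comp l.injective) fun n => (l n).2.2
  have hQsep : ∀ m n, m < n → c / 2 - 2 * ‖S‖ ≤ ‖Q (y n) - Q (y m)‖ := by
    intro m n hmn
    have hSy : ‖S (y n - y m)‖ ≤ 2 * ‖S‖ := by
      grw [S.le_opNorm, norm_sub_le, hy, hy]
      linarith
    have hsplit : ‖(S + Q) (y n) - (S + Q) (y m)‖ ≤ ‖S (y n - y m)‖ + ‖Q (y n) - Q (y m)‖ := by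
      rw [add_apply, add_apply, add_sub_add_comm, map_sub]
      exact norm_add_le _ _
    have hlower : ‖(l n : 𝕜)‖ / 2 ≤ ‖(S + Q) (y n) - (S + Q) (y m)‖ := hsep m n hmn
    linarith [(l n).2.1]
  obtain ⟨a, φ, hφ, ha⟩ := exists_subseq_tendsto_of_isCompactOperator hQ fun n => (hy n).le
  obtain ⟨N, hN⟩ := Metric.cauchySeq_iff'.mp ha.cauchySeq (c / 2 - 2 * ‖S‖) (by linarith)
  have hclose := hN (N + 1) N.le_succ
  rw [dist_eq_norm] at hclose
  exact hclose.not_ge (hQsep _ _ (hφ N.lt_succ_self))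

end Eigenvalues

section SpectralRadius

theorem mem_resolventSet_of_norm_lt {𝕜 X : Type*} [NontriviallyNormedField 𝕜]
    [NormedAddCommGroup X] [NormedSpace 𝕜 X] [CompleteSpace X] {S : X →L[𝕜] X} {w : 𝕜}
    (h : ‖S‖ < ‖w‖) : w ∈ resolventSet 𝕜 S := by
  refine spectrum.mem_resolventSet_of_norm_lt_mul ?_
  grw [ContinuousLinearMap.one_def, ContinuousLinearMap.norm_id_le, mul_one]
  exact h

theorem finite_setOf_pow_mem {R : Type*} [CommRing R] [IsDomain R] {n : ℕ} (hn : n ≠ 0)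
    {s : Set R} (hs : s.Finite) : {z : R | z ^ n ∈ s}.Finite :=
  Set.Finite.preimage' hs fun b _ => by
    refine (Polynomial.nthRoots n b).finite_toSet.subset fun z hz => ?_
    exact (Polynomial.mem_nthRoots hn.bot_lt).mpr hz

variable {X : Type*} [NormedAddCommGroup X] [NormedSpace ℂ X] [CompleteSpace X]

theorem finite_spectrum_of_spectralRadius_toCalkin_lt {U : X →L[ℂ] X} {κ : NNReal}
    (h : spectralRadius ℂ (toCalkin ℂ U) < κ) : {z | z ∈ spectrum ℂ U ∧ κ ≤ ‖z‖₊}.Finite := by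
  obtain ⟨n, hn, hUn⟩ := exists_const_mul_norm_pow_lt_pow h 4
  rw [← map_pow, ← lt_div_iff₀' four_pos] at hUn
  obtain ⟨S, hS, hQ⟩ := exists_norm_lt_isCompactOperator_sub hUn
  rw [lt_div_iff₀' four_pos] at hS
  refine (finite_setOf_pow_mem hn (finite_setOf_hasEigenvalue_add (𝕜 := ℂ) hQ hS)).subset ?_
  rintro z ⟨hz, hκz⟩
  have hnorm : (κ : ℝ) ^ n ≤ ‖z ^ n‖ := by
    rw [norm_pow]
    gcongr
    exact hκz
  refine ⟨hnorm, hasEigenvalue_add_of_isCompactOperator hQ (mem_resolventSet_of_norm_lt ?_) ?_⟩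
  · linarith [norm_nonneg S]
  · rw [add_sub_cancel]
    exact spectrum.pow_mem_pow U n hz

theorem mem_closure_resolventSet_of_spectralRadius_toCalkin_lt {U : X →L[ℂ] X} {z : ℂ}
    (h : spectralRadius ℂ (toCalkin ℂ U) < ‖z‖₊) : z ∈ closure (resolventSet ℂ U) := by
  obtain ⟨ρ, hρ, hρz⟩ := ENNReal.lt_iff_exists_nnreal_btwn.mp h
  rw [ENNReal.coe_lt_coe] at hρz
  have hopen : IsOpen {w : ℂ | ρ < ‖w‖₊} := isOpen_lt continuous_const continuous_nnnorm
  have hdense := (finite_spectrum_of_spectralRadius_toCalkin_lt hρ).countable.dense_compl ℂ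
  refine closure_mono ?_ (hdense.open_subset_closure_inter hopen hρz)
  rintro w ⟨hw, hwσ⟩
  by_contra hwr
  exact hwσ ⟨hwr, hw.le⟩

theorem hasEigenvalue_of_spectralRadius_toCalkin_lt {U : X →L[ℂ] X} {z : ℂ}
    (hz : z ∈ spectrum ℂ U) (h : spectralRadius ℂ (toCalkin ℂ U) < ‖z‖₊) :
    HasEigenvalue U.toLinearMap z :=
  hasEigenvalue_of_mem_closure_resolventSet hz
    (spectrum.mem_resolventSet_of_spectralRadius_lt h)
    (mem_closure_resolventSet_of_spectralRadius_toCalkin_lt h)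

theorem spectralRadius_toCalkin_add_le {W K : X →L[ℂ] X}
    (hK : ∀ z : ℂ, ‖W‖ < ‖z‖ → ∃ n, IsCompactOperator ⇑((K * resolvent W z) ^ n)) :
    spectralRadius ℂ (toCalkin ℂ (W + K)) ≤ ‖W‖₊ := by
  refine iSup₂_le fun z hz => ENNReal.coe_le_coe.mpr (not_lt.mp fun hWz => hz ?_)
  obtain ⟨n, hn⟩ := hK z hWz
  exact mem_resolventSet_toCalkin_add (mem_resolventSet_of_norm_lt hWz) hn

theorem spectrum_outside_ball_finite_eigenvalues_general {W K : X →L[ℂ] X}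
    (hK : ∀ z : ℂ, ‖W‖ < ‖z‖ → ∃ n, IsCompactOperator ⇑((K * resolvent W z) ^ n)) {κ : ℝ}
    (hκ : ‖W‖ < κ) :
    {z : ℂ | z ∈ spectrum ℂ (W + K) ∧ κ ≤ ‖z‖}.Finite ∧
      ∀ z ∈ spectrum ℂ (W + K), κ ≤ ‖z‖ → ∃ f : X, f ≠ 0 ∧ (W + K) f = z • f := by
  lift κ to NNReal using (norm_nonneg W).trans hκ.le
  have hradius : spectralRadius ℂ (toCalkin ℂ (W + K)) < κ :=
    (spectralRadius_toCalkin_add_le hK).trans_lt (ENNReal.coe_lt_coe.mpr hκ)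
  refine ⟨finite_spectrum_of_spectralRadius_toCalkin_lt hradius, fun z hz hκz => ?_⟩
  have heigen := hasEigenvalue_of_spectralRadius_toCalkin_lt hz
    (hradius.trans_le (ENNReal.coe_le_coe.mpr hκz))
  obtain ⟨f, hf⟩ := heigen.exists_hasEigenvector
  exact ⟨f, hf.2, hf.apply_eq_smul⟩

end SpectralRadius

/-- **Theorem 2.1 ii).** Let `U` be a positive bounded linear operator on the complex space
`X_ℂ = L^p(E, μ; ℂ)` (mapping a.e. real-valued functions to a.e. real-valued functions and
a.e. nonnegative functions to a.e. nonnegative functions), with spectral radius `r(U) > 0`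
(Gelfand formula), admitting a splitting `U = W + K` with `‖W‖ < r(U)` and `K (λ - W)⁻¹`
power compact for every `λ ∈ ℂ` with `|λ| > ‖W‖`.  Then for every `κ` with
`‖W‖ < κ < r(U)`, the part of the spectrum `σ(U) ∩ {|z| ≥ κ}` is a finite set consisting
of eigenvalues of `U`. -/
theorem spectrum_outside_ball_finite_eigenvalues
    {α : Type*} [MeasurableSpace α] {μ : Measure α} [SigmaFinite μ]
    {p : ℝ≥0∞} [Fact (1 ≤ p)] (hp : p ≠ ∞)
    (U W K : Lp ℂ p μ →L[ℂ] Lp ℂ p μ)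
    (hreal : ∀ f : Lp ℂ p μ, (∀ᵐ x ∂μ, (f x).im = 0) → (∀ᵐ x ∂μ, ((U f) x).im = 0))
    (hpos : ∀ f : Lp ℂ p μ, (∀ᵐ x ∂μ, (f x).im = 0 ∧ 0 ≤ (f x).re) →
      (∀ᵐ x ∂μ, ((U f) x).im = 0 ∧ 0 ≤ ((U f) x).re))
    (r : ℝ) (hr : Tendsto (fun n : ℕ => ‖U ^ n‖ ^ (1 / (n : ℝ))) atTop (nhds r))
    (hr0 : 0 < r) (hsplit : U = W + K) (hW : ‖W‖ < r)
    (hcomp : ∀ lam : ℂ, ‖W‖ < ‖lam‖ → ∃ n : ℕ, 0 < n ∧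
      IsCompactOperator ⇑((K * Ring.inverse (lam • (1 : Lp ℂ p μ →L[ℂ] Lp ℂ p μ) - W)) ^ n)) :
    ∀ κ : ℝ, ‖W‖ < κ → κ < r →
      {z : ℂ | z ∈ spectrum ℂ U ∧ κ ≤ ‖z‖}.Finite ∧
      ∀ z ∈ spectrum ℂ U, κ ≤ ‖z‖ → ∃ f : Lp ℂ p μ, f ≠ 0 ∧ U f = z • f := by
  subst hsplit
  exact fun κ hκ _ => spectrum_outside_ball_finite_eigenvalues_general
    (fun lam hlam => (hcomp lam hlam).imp fun _ => And.right) hκ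
end

section
/- Let U be a strictly positive bounded linear operator on X = L^p(E, μ) with spectral radius r(U) > 0, and suppose there exist f₀ ∈ X₊ \ {0} and φ₀ ∈ X'₊ \ {0} with U f₀ = r(U) f₀ and U* φ₀ = r(U) φ₀. Then the eigenspace {f ∈ X : U f = r(U) f} equals the span of f₀, and the eigenspace {φ ∈ X' : U* φ = r(U) φ} equals the span of φ₀. -/
open MeasureTheory Filter ENNReal

/-!
Both claims reduce to the vanishing of an eigenvector `g` with `φ₀ g = 0`, respectively of an
eigenfunctional `ψ` with `ψ f₀ = 0`.

The function `U g⁺ - r g⁺ ≥ 0` is annihilated by `φ₀`, which vanishes at no nonzero `f ≥ 0` because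
`U f` is then a.e. positive; so `g⁺` is again an eigenvector. A nonzero positive eigenvector is a.e.
positive and `g⁻` is disjoint from `g⁺`, so one of the two vanishes, and `φ₀ g = 0` gives `g = 0`.

For `ψ`, a Hahn decomposition of the signed measure `A ↦ ψ (1_A f₀)` yields a set `P` such that
`ψ₁ f = ψ (1_P f)` and `ψ₂ f = -ψ (1_{Pᶜ} f)` are positive functionals with `ψ = ψ₁ - ψ₂`. Put
`a = 1_P f₀ ≤ f₀`. Then `ψ₁ (U a) - ψ₂ (U a) = ψ (U a) = r ψ a = r ψ₁ f₀ = ψ₁ (U f₀) ≥ ψ₁ (U a)`,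
so `ψ₂ (U a) = 0`. Since `U a` is a.e. positive unless `a = 0`, either `ψ₂ = 0` or `a = 0`; both
give `ψ₁ f₀ = ψ₂ f₀ = 0`, and a positive functional vanishing at an a.e. positive function is zero.
-/

section VectorLattice

variable {𝕜 V : Type*} [Field 𝕜] [LinearOrder 𝕜] [IsStrictOrderedRing 𝕜] [AddCommGroup V]
  [Lattice V] [IsOrderedAddMonoid V] [Module 𝕜 V] [PosSMulMono 𝕜 V]

theorem map_posPart_eq_smul_posPart {U : V →ₗ[𝕜] V} (hU : Monotone U) {φ : V →ₗ[𝕜] 𝕜}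
    (hφ : ∀ f, 0 ≤ f → φ f = 0 → f = 0) {r : 𝕜} (hr : 0 < r)
    (hφU : ∀ f, φ (U f) = r * φ f) {g : V} (hg : U g = r • g) : U g⁺ = r • g⁺ := by
  have hle : r • g⁺ ≤ U g⁺ := by
    rw [← le_inv_smul_iff_of_pos hr]
    refine sup_le ?_ (smul_nonneg (inv_nonneg.2 hr.le) ?_)
    · rw [le_inv_smul_iff_of_pos hr, ← hg]
      exact hU (le_posPart g)
    · simpa using hU (posPart_nonneg g)
  rw [← sub_eq_zero]
  exact hφ _ (sub_nonneg.2 hle) (by simp [hφU])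

end VectorLattice

section DominatedConvergence

open Topology

variable {α ι E : Type*} [MeasurableSpace α] {μ : Measure α} {p : ℝ≥0∞} [NormedAddCommGroup E]
  {l : Filter ι} [l.IsCountablyGenerated]

theorem tendsto_eLpNorm_zero_of_dominated (hp : p ≠ ∞) {F : ι → α → E} {g : α → ℝ}
    (hF : ∀ i, AEStronglyMeasurable (F i) μ) (hg : MemLp g p μ)
    (hbound : ∀ i, ∀ᵐ x ∂μ, ‖F i x‖ ≤ g x)
    (hlim : ∀ᵐ x ∂μ, Tendsto (fun i => F i x) l (𝓝 0)) :
    Tendsto (fun i => eLpNorm (F i) p μ) l (𝓝 0) := by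
  obtain rfl | hp0 := eq_or_ne p 0
  · simpa using tendsto_const_nhds
  have hpr : 0 < p.toReal := ENNReal.toReal_pos hp0 hp
  have hlintegral : Tendsto (fun i => ∫⁻ x, ‖F i x‖ₑ ^ p.toReal ∂μ) l (𝓝 (∫⁻ _, 0 ∂μ)) := by
    refine tendsto_lintegral_filter_of_dominated_convergence' (fun x => ‖g x‖ₑ ^ p.toReal)
      (.of_forall fun i => (hF i).enorm.pow_const _) (.of_forall fun i => ?_)
      (lintegral_rpow_enorm_lt_top_of_eLpNorm_lt_top hp0 hp hg.2).ne ?_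
    · filter_upwards [hbound i] with x hx
      gcongr
      exact enorm_le_iff_norm_le.2 (hx.trans (Real.le_norm_self _))
    · filter_upwards [hlim] with x hx
      simpa [hpr] using hx.enorm.ennrpow_const p.toReal
  simp_rw [eLpNorm_eq_lintegral_rpow_enorm_toReal hp0 hp]
  simpa [hpr] using hlintegral.ennrpow_const (1 / p.toReal)

theorem tendsto_Lp_of_dominated [Fact (1 ≤ p)] [l.NeBot] (hp : p ≠ ∞) {F : ι → Lp E p μ}
    {f : Lp E p μ} {g : α → ℝ} (hg : MemLp g p μ) (hbound : ∀ᵐ x ∂μ, ∀ i, ‖F i x‖ ≤ g x)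
    (hlim : ∀ᵐ x ∂μ, Tendsto (fun i => F i x) l (𝓝 (f x))) : Tendsto F l (𝓝 f) := by
  rw [Lp.tendsto_Lp_iff_tendsto_eLpNorm']
  refine tendsto_eLpNorm_zero_of_dominated hp
    (fun i => (Lp.aestronglyMeasurable _).sub (Lp.aestronglyMeasurable _)) (hg.add hg)
    (fun i => ?_) ?_
  · filter_upwards [hbound, hlim] with x hFx hfx
    exact (norm_sub_le _ _).trans (add_le_add (hFx i) (le_of_tendsto' hfx.norm hFx))
  · filter_upwards [hlim] with x hx
    simpa using hx.sub_const (f x)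

end DominatedConvergence

section IndicatorOperator

variable {α E : Type*} [MeasurableSpace α] {μ : Measure α} {p : ℝ≥0∞} [Fact (1 ≤ p)]
  [NormedAddCommGroup E] [NormedSpace ℝ E] {A B : Set α}

/-- The band projection `f ↦ 1_A f` on `Lp E p μ`, encoded as the Hölder product with the bounded
function `1_A` so that linearity and continuity are inherited. -/
noncomputable def indicatorL (hA : MeasurableSet A) : Lp E p μ →L[ℝ] Lp E p μ :=
  (ContinuousLinearMap.lsmul ℝ ℝ).holderL μ ∞ p p
    (((memLp_top_const (1 : ℝ)).indicator hA).toLp (A.indicator fun _ => 1))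

theorem coeFn_indicatorL (hA : MeasurableSet A) (f : Lp E p μ) :
    indicatorL hA f =ᵐ[μ] A.indicator f := by
  filter_upwards [ContinuousLinearMap.coeFn_holder (r := p) (ContinuousLinearMap.lsmul ℝ ℝ)
      (((memLp_top_const (1 : ℝ)).indicator hA).toLp (A.indicator fun _ => 1)) f,
    (((memLp_top_const (μ := μ) (1 : ℝ)).indicator hA)).coeFn_toLp] with x hx h1
  refine hx.trans ?_
  rw [h1]
  by_cases hxA : x ∈ A <;> simp [hxA]

theorem indicatorL_add_indicatorL_compl (hA : MeasurableSet A) (f : Lp E p μ) :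
    indicatorL hA f + indicatorL hA.compl f = f := by
  ext1
  filter_upwards [coeFn_indicatorL hA f, coeFn_indicatorL hA.compl f,
    Lp.coeFn_add (indicatorL hA f) (indicatorL hA.compl f)] with x h1 h2 hadd
  rw [hadd, Pi.add_apply, h1, h2, Set.indicator_self_add_compl_apply]

theorem indicatorL_indicatorL (hA : MeasurableSet A) (hB : MeasurableSet B) (f : Lp E p μ) :
    indicatorL hA (indicatorL hB f) = indicatorL (hA.inter hB) f := by
  ext1
  filter_upwards [coeFn_indicatorL hA (indicatorL hB f), coeFn_indicatorL hB f,
    coeFn_indicatorL (hA.inter hB) f] with x h1 h2 h3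
  rw [h1, h3, ← Set.indicator_indicator]
  by_cases hxA : x ∈ A <;> simp [hxA, h2]

theorem indicatorL_empty (f : Lp E p μ) : indicatorL MeasurableSet.empty f = 0 := by
  ext1
  filter_upwards [coeFn_indicatorL MeasurableSet.empty f, Lp.coeFn_zero E p μ] with x h1 h2
  rw [h1, h2, Set.indicator_empty, Pi.zero_apply]

theorem indicatorL_nonneg [PartialOrder E] (hA : MeasurableSet A) {f : Lp E p μ} (hf : 0 ≤ f) :
    0 ≤ indicatorL hA f := by
  rw [← Lp.coeFn_nonneg] at hf ⊢
  filter_upwards [coeFn_indicatorL hA f, hf] with x h1 hx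
  rw [h1]
  exact Set.indicator_apply_nonneg fun _ => hx

theorem indicatorL_le_self [PartialOrder E] [IsOrderedAddMonoid E] (hA : MeasurableSet A)
    {f : Lp E p μ} (hf : 0 ≤ f) :
    indicatorL hA f ≤ f := by
  conv_rhs => rw [← indicatorL_add_indicatorL_compl hA f]
  exact le_add_of_nonneg_right (indicatorL_nonneg hA.compl hf)

theorem hasSum_indicatorL (hp : p ≠ ∞) {A : ℕ → Set α} (hA : ∀ n, MeasurableSet (A n))
    (hdisj : Pairwise (Function.onFun Disjoint A)) (f : Lp E p μ) :
    HasSum (fun n => indicatorL (hA n) f) (indicatorL (MeasurableSet.iUnion hA) f) := by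
  have hcoe : ∀ᵐ x ∂μ, ∀ s : Finset ℕ,
      (∑ n ∈ s, indicatorL (hA n) f : Lp E p μ) x = (⋃ n ∈ s, A n).indicator f x := by
    refine ae_all_iff.2 fun s => ?_
    filter_upwards [ae_all_iff.2 fun n => coeFn_indicatorL (hA n) f,
      Lp.coeFn_finsetSum s fun n => indicatorL (hA n) f] with x h1 hsum
    rw [hsum, Finset.sum_apply, Finset.indicator_biUnion_apply _ _ fun i _ j _ hij => hdisj hij]
    exact Finset.sum_congr rfl fun n _ => h1 n
  refine tendsto_Lp_of_dominated hp (Lp.memLp f).norm ?_ ?_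
  · filter_upwards [hcoe] with x hx s
    rw [hx]
    exact norm_indicator_le_norm_self _ _
  · filter_upwards [hcoe, coeFn_indicatorL (MeasurableSet.iUnion hA) f] with x hx hunion
    simp only [hx, hunion]
    exact (tendsto_indicator_biUnion_finset A f x).mono_right (pure_le_nhds _)

open Classical in
/-- The vector measure `A ↦ 1_A f` with values in `Lp E p μ`. -/
noncomputable def indicatorMeasure (hp : p ≠ ∞) (f : Lp E p μ) : VectorMeasure α (Lp E p μ) where
  measureOf' A := if hA : MeasurableSet A then indicatorL hA f else 0
  empty' := by rw [dif_pos MeasurableSet.empty, indicatorL_empty]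
  not_measurable' _ hA := dif_neg hA
  m_iUnion' A hA hdisj := by
    simpa only [hA, MeasurableSet.iUnion hA, dif_pos] using hasSum_indicatorL hp hA hdisj f

theorem indicatorMeasure_apply (hp : p ≠ ∞) (f : Lp E p μ) (hA : MeasurableSet A) :
    indicatorMeasure hp f A = indicatorL hA f :=
  dif_pos hA

end IndicatorOperator

theorem exists_simpleFunc_le_tendsto {α : Type*} [MeasurableSpace α] {h : α → NNReal}
    (hh : Measurable h) : ∃ s : ℕ → SimpleFunc α NNReal,
      (∀ n x, s n x ≤ h x) ∧ ∀ x, Tendsto (fun n => s n x) atTop (nhds (h x)) := by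
  let H : α → ℝ≥0∞ := fun x => h x
  have hH : Measurable H := hh.coe_nnreal_ennreal
  refine ⟨fun n => (SimpleFunc.eapprox H n).map ENNReal.toNNReal, fun n x => ?_, fun x => ?_⟩
  · refine ENNReal.toNNReal_mono (b := H x) coe_ne_top ?_
    rw [← SimpleFunc.iSup_eapprox_apply hH x]
    exact le_iSup (fun k => SimpleFunc.eapprox H k x) n
  · exact (ENNReal.tendsto_toNNReal (a := H x) coe_ne_top).comp (SimpleFunc.tendsto_eapprox hH x)

section Functional

variable {α : Type*} [MeasurableSpace α] {μ : Measure α} {p : ℝ≥0∞} [Fact (1 ≤ p)]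
  {w : Lp ℝ p μ} {ψ : Lp ℝ p μ →L[ℝ] ℝ}

theorem exists_ae_eq_simpleFunc_mul_and_map_nonneg
    (hψ : ∀ (A : Set α) (hA : MeasurableSet A), 0 ≤ ψ (indicatorL hA w))
    (s : SimpleFunc α NNReal) :
    ∃ f : Lp ℝ p μ, (∀ᵐ x ∂μ, f x = s x * w x) ∧ 0 ≤ ψ f := by
  induction s using SimpleFunc.induction with
  | @const c A hA =>
    refine ⟨(c : ℝ) • indicatorL hA w, ?_, ?_⟩
    · filter_upwards [Lp.coeFn_smul (c : ℝ) (indicatorL hA w), coeFn_indicatorL hA w] with x h1 h2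
      rw [h1, Pi.smul_apply, h2]
      by_cases hx : x ∈ A <;> simp [hx]
    · rw [map_smul]
      exact smul_nonneg c.2 (hψ A hA)
  | add _ ihf ihg =>
    obtain ⟨f, hf, hψf⟩ := ihf
    obtain ⟨g, hg, hψg⟩ := ihg
    refine ⟨f + g, ?_, by simpa only [map_add] using add_nonneg hψf hψg⟩
    filter_upwards [hf, hg, Lp.coeFn_add f g] with x h1 h2 hadd
    rw [hadd, Pi.add_apply, h1, h2]
    simp [add_mul]

theorem map_nonneg_of_indicatorL_nonneg (hp : p ≠ ∞) (hw : ∀ᵐ x ∂μ, 0 < w x)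
    (hψ : ∀ (A : Set α) (hA : MeasurableSet A), 0 ≤ ψ (indicatorL hA w))
    {f : Lp ℝ p μ} (hf : 0 ≤ f) : 0 ≤ ψ f := by
  have hmeas : Measurable fun x => (f x / w x).toNNReal :=
    ((Lp.stronglyMeasurable f).measurable.div (Lp.stronglyMeasurable w).measurable).real_toNNReal
  obtain ⟨s, hs_le, hs_lim⟩ := exists_simpleFunc_le_tendsto hmeas
  choose F hF hψF using fun n => exists_ae_eq_simpleFunc_mul_and_map_nonneg hψ (s n)
  have hdiv : ∀ᵐ x ∂μ, ((f x / w x).toNNReal : ℝ) * w x = f x := by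
    filter_upwards [(Lp.coeFn_nonneg f).2 hf, hw] with x hfx hwx
    rw [Real.coe_toNNReal _ (div_nonneg hfx hwx.le), div_mul_cancel₀ _ hwx.ne']
  have hlim : Tendsto F atTop (nhds f) := by
    refine tendsto_Lp_of_dominated hp (Lp.memLp f) ?_ ?_
    · filter_upwards [ae_all_iff.2 hF, hdiv, hw] with x hFx hfx hwx n
      rw [hFx, Real.norm_of_nonneg (by positivity), ← hfx]
      gcongr
      exact hs_le n x
    · filter_upwards [ae_all_iff.2 hF, hdiv] with x hFx hfx
      simp only [hFx]
      rw [← hfx]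
      exact (NNReal.tendsto_coe.2 (hs_lim x)).mul_const _
  exact ge_of_tendsto' ((ψ.continuous.tendsto f).comp hlim) hψF

theorem eq_zero_of_map_eq_zero_of_ae_pos (hp : p ≠ ∞) (hψ : ∀ f, 0 ≤ f → 0 ≤ ψ f)
    (hw : ∀ᵐ x ∂μ, 0 < w x) (hψw : ψ w = 0) : ψ = 0 := by
  have hw0 : 0 ≤ w := (Lp.coeFn_nonneg w).1 (hw.mono fun _ => le_of_lt)
  have hnonpos : ∀ f, 0 ≤ f → 0 ≤ (-ψ) f := by
    refine fun f => map_nonneg_of_indicatorL_nonneg hp hw fun A hA => ?_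
    have hsum := congrArg ψ (indicatorL_add_indicatorL_compl hA w)
    rw [map_add, hψw] at hsum
    have hcompl := hψ _ (indicatorL_nonneg hA.compl hw0)
    rw [neg_apply]
    linarith
  have hzero : ∀ f, 0 ≤ f → ψ f = 0 := fun f hf =>
    le_antisymm (neg_nonneg.1 (hnonpos f hf)) (hψ f hf)
  ext f
  rw [← posPart_sub_negPart f, map_sub, hzero _ (posPart_nonneg f), hzero _ (negPart_nonneg f)]
  simp

theorem exists_hahn_decomposition (hp : p ≠ ∞) (hw : ∀ᵐ x ∂μ, 0 < w x) (ψ : Lp ℝ p μ →L[ℝ] ℝ) :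
    ∃ (P : Set α) (hP : MeasurableSet P), (∀ f, 0 ≤ f → 0 ≤ ψ (indicatorL hP f)) ∧
      ∀ f, 0 ≤ f → ψ (indicatorL hP.compl f) ≤ 0 := by
  let ν : SignedMeasure α :=
    (indicatorMeasure hp w).mapRange (ψ : Lp ℝ p μ →+ ℝ) ψ.continuous
  have hν : ∀ {A : Set α} (hA : MeasurableSet A), ν A = ψ (indicatorL hA w) := fun hA =>
    congrArg ψ (indicatorMeasure_apply hp w hA)
  obtain ⟨P, hP, hpos, hneg⟩ := ν.exists_compl_positive_negative
  rw [VectorMeasure.restrict_le_restrict_iff _ _ hP] at hpos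
  rw [VectorMeasure.restrict_le_restrict_iff _ _ hP.compl] at hneg
  refine ⟨P, hP, fun f => ?_, fun f hf => neg_nonneg.1 ?_⟩
  · refine map_nonneg_of_indicatorL_nonneg (ψ := ψ.comp (indicatorL hP)) hp hw fun A hA => ?_
    rw [ContinuousLinearMap.comp_apply, indicatorL_indicatorL, ← hν]
    exact hpos (hP.inter hA) Set.inter_subset_left
  · refine map_nonneg_of_indicatorL_nonneg (ψ := -ψ.comp (indicatorL hP.compl)) hp hw
      (fun A hA => neg_nonneg.2 ?_) hf
    rw [ContinuousLinearMap.coe_coe, ContinuousLinearMap.comp_apply, indicatorL_indicatorL, ← hν]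
    exact hneg (hP.compl.inter hA) Set.inter_subset_left

end Functional

section LpOrder

variable {α : Type*} [MeasurableSpace α] {μ : Measure α} {p : ℝ≥0∞}

instance {E : Type*} [NormedAddCommGroup E] [NormedSpace ℝ E] [PartialOrder E] [PosSMulMono ℝ E] :
    PosSMulMono ℝ (Lp E p μ) where
  smul_le_smul_of_nonneg_left c hc f g hfg := by
    rw [← Lp.coeFn_le] at hfg ⊢
    filter_upwards [hfg, Lp.coeFn_smul c f, Lp.coeFn_smul c g] with x hx hf hg
    rw [hf, hg]
    exact smul_le_smul_of_nonneg_left hx hc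

theorem eq_zero_of_inf_eq_zero_of_ae_pos {f g : Lp ℝ p μ} (hf : ∀ᵐ x ∂μ, 0 < f x)
    (hfg : f ⊓ g = 0) : g = 0 := by
  ext1
  filter_upwards [hf, Lp.coeFn_inf f g, Lp.coeFn_zero ℝ p μ] with x hfx hinf hzero
  rw [hfg, hzero, Pi.inf_apply, Pi.zero_apply] at hinf
  rw [hzero, Pi.zero_apply]
  rcases min_choice (f x) (g x) with h | h
  · exact absurd (hinf.trans h) hfx.ne
  · exact (hinf.trans h).symm

end LpOrder

section StrictlyPositive

variable {α : Type*} [MeasurableSpace α] {μ : Measure α} {p : ℝ≥0∞}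

/-- A strictly positive operator on `L^p`: it maps nonzero nonnegative functions to functions that
are a.e. positive. -/
def StrictlyPositive (U : Lp ℝ p μ →ₗ[ℝ] Lp ℝ p μ) : Prop :=
  ∀ f, 0 ≤ f → f ≠ 0 → ∀ᵐ x ∂μ, 0 < U f x

namespace StrictlyPositive

variable {U : Lp ℝ p μ →ₗ[ℝ] Lp ℝ p μ} {r : ℝ} {f g : Lp ℝ p μ}

theorem monotone (hU : StrictlyPositive U) : Monotone U := by
  refine (monotone_iff_map_nonneg U).2 fun f hf => ?_
  obtain rfl | hne := eq_or_ne f 0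
  · rw [map_zero]
  · exact (Lp.coeFn_nonneg _).1 ((hU f hf hne).mono fun _ => le_of_lt)

theorem map_nonneg (hU : StrictlyPositive U) (hf : 0 ≤ f) : 0 ≤ U f := by
  simpa only [map_zero] using hU.monotone hf

theorem ae_eigenvalue_mul_pos (hU : StrictlyPositive U) (hf : 0 ≤ f) (hne : f ≠ 0)
    (hUf : U f = r • f) : ∀ᵐ x ∂μ, 0 < r * f x := by
  filter_upwards [hU f hf hne, Lp.coeFn_smul r f] with x hx hsmul
  rwa [hUf, hsmul] at hx

theorem eigenvalue_pos (hU : StrictlyPositive U) (hf : 0 ≤ f) (hne : f ≠ 0)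
    (hUf : U f = r • f) : 0 < r := by
  by_contra! hr
  refine hne (Lp.ext ?_)
  filter_upwards [hU.ae_eigenvalue_mul_pos hf hne hUf, (Lp.coeFn_nonneg f).2 hf] with x hx hfx
  exact absurd hx (mul_nonpos_of_nonpos_of_nonneg hr hfx).not_gt

theorem ae_pos_of_map_eq_smul (hU : StrictlyPositive U) (hf : 0 ≤ f) (hne : f ≠ 0)
    (hUf : U f = r • f) : ∀ᵐ x ∂μ, 0 < f x := by
  filter_upwards [hU.ae_eigenvalue_mul_pos hf hne hUf] with x hx
  exact pos_of_mul_pos_right hx (hU.eigenvalue_pos hf hne hUf).le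

variable [Fact (1 ≤ p)] {φ ψ : Lp ℝ p μ →L[ℝ] ℝ}

theorem eq_zero_of_eigenfunctional_eq_zero (hU : StrictlyPositive U) (hp : p ≠ ∞)
    (hφ : ∀ f, 0 ≤ f → 0 ≤ φ f) (hφne : φ ≠ 0) (hφU : ∀ f, φ (U f) = r * φ f)
    (hf : 0 ≤ f) (hφf : φ f = 0) : f = 0 := by
  by_contra hne
  exact hφne (eq_zero_of_map_eq_zero_of_ae_pos hp hφ (hU f hf hne) (by rw [hφU, hφf, mul_zero]))

theorem eigenvector_eq_zero (hU : StrictlyPositive U) (hp : p ≠ ∞) (hr : 0 < r)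
    (hφ : ∀ f, 0 ≤ f → 0 ≤ φ f) (hφne : φ ≠ 0) (hφU : ∀ f, φ (U f) = r * φ f)
    (hUg : U g = r • g) (hφg : φ g = 0) : g = 0 := by
  have hφ_zero : ∀ f, 0 ≤ f → φ f = 0 → f = 0 := fun f =>
    hU.eq_zero_of_eigenfunctional_eq_zero hp hφ hφne hφU
  have hpos : U g⁺ = r • g⁺ :=
    map_posPart_eq_smul_posPart (φ := (φ : Lp ℝ p μ →ₗ[ℝ] ℝ)) hU.monotone hφ_zero hr hφU hUg
  have hφ_parts : φ g⁺ = φ g⁻ := by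
    rwa [← posPart_sub_negPart g, map_sub, sub_eq_zero] at hφg
  have hneg_zero : g⁻ = 0 := by
    by_cases hpos_zero : g⁺ = 0
    · exact hφ_zero _ (negPart_nonneg g) (by rw [← hφ_parts, hpos_zero, map_zero])
    · exact eq_zero_of_inf_eq_zero_of_ae_pos
        (hU.ae_pos_of_map_eq_smul (posPart_nonneg g) hpos_zero hpos) (posPart_inf_negPart_eq_zero g)
  have hpos_zero : g⁺ = 0 :=
    hφ_zero _ (posPart_nonneg g) (by rw [hφ_parts, hneg_zero, map_zero])
  rw [← posPart_sub_negPart g, hpos_zero, hneg_zero, sub_zero]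

theorem eigenfunctional_eq_zero (hU : StrictlyPositive U) (hp : p ≠ ∞)
    (hf : ∀ᵐ x ∂μ, 0 < f x) (hUf : U f = r • f) (hψU : ∀ g, ψ (U g) = r * ψ g)
    (hψf : ψ f = 0) : ψ = 0 := by
  have hf0 : 0 ≤ f := (Lp.coeFn_nonneg f).1 (hf.mono fun _ => le_of_lt)
  obtain ⟨P, hP, hpos, hneg⟩ := exists_hahn_decomposition hp hf ψ
  set ψ₁ := ψ.comp (indicatorL hP)
  set ψ₂ := -ψ.comp (indicatorL hP.compl)
  have hψ₂ : ∀ g, 0 ≤ g → 0 ≤ ψ₂ g := fun g hg => neg_nonneg.2 (hneg g hg)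
  have hsub : ∀ g, ψ g = ψ₁ g - ψ₂ g := fun g => by
    conv_lhs => rw [← indicatorL_add_indicatorL_compl hP g, map_add]
    exact (sub_neg_eq_add _ _).symm
  have heq : ψ₁ f = ψ₂ f := by rw [← sub_eq_zero, ← hsub, hψf]
  suffices h : ψ₁ f = 0 by
    have hψ₁_zero : ψ₁ = 0 := eq_zero_of_map_eq_zero_of_ae_pos hp hpos hf h
    have hψ₂_zero : ψ₂ = 0 := eq_zero_of_map_eq_zero_of_ae_pos hp hψ₂ hf (heq ▸ h)
    ext g
    simp [hsub, hψ₁_zero, hψ₂_zero]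
  set a := indicatorL hP f
  obtain ha | ha := eq_or_ne a 0
  · exact (congrArg ψ ha).trans (map_zero ψ)
  have hUa : ψ₁ (U a) - ψ₂ (U a) = ψ₁ (U f) := by
    rw [← hsub, hψU, hUf, map_smul]
    rfl
  have hψ₁_mono : ψ₁ (U a) ≤ ψ₁ (U f) := by
    rw [← sub_nonneg, ← map_sub]
    exact hpos _ (sub_nonneg.2 (hU.monotone (indicatorL_le_self hP hf0)))
  have hψ₂Ua : ψ₂ (U a) = 0 :=
    le_antisymm (by linarith) (hψ₂ _ (hU.map_nonneg (indicatorL_nonneg hP hf0)))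
  rw [heq, eq_zero_of_map_eq_zero_of_ae_pos hp hψ₂
    (hU a (indicatorL_nonneg hP hf0) ha) hψ₂Ua]
  rfl

end StrictlyPositive

end StrictlyPositive

theorem eigenspaces_one_dimensional_general
    {α : Type*} [MeasurableSpace α] {μ : Measure α} {p : ℝ≥0∞} [Fact (1 ≤ p)] (hp : p ≠ ∞)
    {U : Lp ℝ p μ →ₗ[ℝ] Lp ℝ p μ} (hU : StrictlyPositive U) {r : ℝ}
    {f₀ : Lp ℝ p μ} (hf₀pos : 0 ≤ f₀) (hf₀ne : f₀ ≠ 0) (hf₀ : U f₀ = r • f₀)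
    {φ₀ : Lp ℝ p μ →L[ℝ] ℝ} (hφ₀pos : ∀ f, 0 ≤ f → 0 ≤ φ₀ f) (hφ₀ne : φ₀ ≠ 0)
    (hφ₀ : ∀ f, φ₀ (U f) = r * φ₀ f) :
    (∀ f : Lp ℝ p μ, U f = r • f ↔ ∃ c : ℝ, f = c • f₀) ∧
    (∀ φ : Lp ℝ p μ →L[ℝ] ℝ, (∀ f, φ (U f) = r * φ f) ↔ ∃ c : ℝ, φ = c • φ₀) := by
  have hr : 0 < r := hU.eigenvalue_pos hf₀pos hf₀ne hf₀
  have hf₀_ae : ∀ᵐ x ∂μ, 0 < f₀ x := hU.ae_pos_of_map_eq_smul hf₀pos hf₀ne hf₀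
  have hpair : φ₀ f₀ ≠ 0 := fun h =>
    hφ₀ne (hU.eigenfunctional_eq_zero hp hf₀_ae hf₀ hφ₀ h)
  refine ⟨fun f => ⟨fun hf => ⟨φ₀ f / φ₀ f₀, sub_eq_zero.1 ?_⟩, ?_⟩,
    fun φ => ⟨fun hφ => ⟨φ f₀ / φ₀ f₀, sub_eq_zero.1 ?_⟩, ?_⟩⟩
  · refine hU.eigenvector_eq_zero hp hr hφ₀pos hφ₀ne hφ₀ ?_ ?_
    · rw [map_sub, map_smul, hf, hf₀, smul_sub, smul_comm]
    · simp [hpair]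
  · rintro ⟨c, rfl⟩
    rw [map_smul, hf₀, smul_comm]
  · refine hU.eigenfunctional_eq_zero hp hf₀_ae hf₀ (fun f => ?_) ?_
    · simp [hφ, hφ₀, mul_sub, mul_left_comm]
    · simp [hpair]
  · rintro ⟨c, rfl⟩ f
    simp [hφ₀, mul_left_comm]

/-- **Theorem 2.2 ii).** Let `U` be a strictly positive bounded linear operator on
`X = L^p(E, μ)` with spectral radius `r(U) > 0` (Gelfand formula), and suppose there exist
`f₀ ∈ X₊ \ {0}` and `φ₀ ∈ X'₊ \ {0}` with `U f₀ = r(U) f₀` and `U* φ₀ = r(U) φ₀`.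
Then `N(U - r(U)) = span f₀` and `N(U* - r(U)) = span φ₀`. -/
theorem eigenspaces_one_dimensional
    {α : Type*} [MeasurableSpace α] {μ : Measure α} [SigmaFinite μ]
    {p : ℝ≥0∞} [Fact (1 ≤ p)] (hp : p ≠ ∞)
    (U : Lp ℝ p μ →L[ℝ] Lp ℝ p μ)
    (hstrict : ∀ f : Lp ℝ p μ, 0 ≤ f → f ≠ 0 → ∀ᵐ x ∂μ, 0 < (U f) x)
    (r : ℝ) (hr : Tendsto (fun n : ℕ => ‖U ^ n‖ ^ (1 / (n : ℝ))) atTop (nhds r))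
    (hr0 : 0 < r)
    (f₀ : Lp ℝ p μ) (hf₀pos : 0 ≤ f₀) (hf₀ne : f₀ ≠ 0) (hf₀ : U f₀ = r • f₀)
    (φ₀ : Lp ℝ p μ →L[ℝ] ℝ) (hφ₀pos : ∀ f, 0 ≤ f → 0 ≤ φ₀ f) (hφ₀ne : φ₀ ≠ 0)
    (hφ₀ : ∀ f, φ₀ (U f) = r * φ₀ f) :
    (∀ f : Lp ℝ p μ, U f = r • f ↔ ∃ c : ℝ, f = c • f₀) ∧
    (∀ φ : Lp ℝ p μ →L[ℝ] ℝ, (∀ f, φ (U f) = r * φ f) ↔ ∃ c : ℝ, φ = c • φ₀) := by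
  exact eigenspaces_one_dimensional_general hp hstrict hf₀pos hf₀ne hf₀ hφ₀pos hφ₀ne hφ₀
end

section
/- Let U be a positive bounded linear operator on the complex space X_ℂ = L^p(E, μ; ℂ) whose restriction to the real subspace is strictly positive, with spectral radius r(U) > 0, and suppose there exist real a.e.-nonnegative f₀ ≠ 0 and φ₀ ≠ 0 with U f₀ = r(U) f₀ and U* φ₀ = r(U) φ₀. Then the peripheral point spectrum of Ũ := U / r(U), namely the set of eigenvalues of Ũ of modulus 1, is a multiplicative subgroup of the unit circle S¹ = {z ∈ ℂ : |z| = 1}: it contains 1 and is closed under multiplication and inverses. -/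
open MeasureTheory Filter ENNReal

/-!
If `U f = r z f` with `|z| = 1`, then `r|f| = |U f| ≤ U|f|`. Pairing `U|f| - r|f|` with `φ₀`
gives `0`. But `φ₀` does not vanish on any a.e. strictly positive `e`: if `φ₀ e = 0`, then `φ₀`
kills the truncations of each `h ≥ 0` to the sets `{h ≤ n e}`, hence also their limit `h`, and
`φ₀ = 0`. Since `U` improves positivity, `U(U|f| - r|f|)` would be such an `e` if it were nonzero,
so `U|f| = r|f|`.

For a set `A`, equality in `|U f| ≤ |U(1_A f)| + |U(f - 1_A f)| ≤ U|f|` shows that `U(1_A f)` has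
the phase of `U f`, namely `U|f| · U(1_A f) = U(1_A|f|) · U f`. If the phase of `f` is within `ε` of
`c` on a non-null set `A`, then `U(1_A f)` is within `ε U(1_A|f|)` of `c U(1_A|f|)`, and
`U(1_A|f|) > 0` a.e., so `|U f - c U|f|| ≤ ε |U f|`. Choosing `c` in the essential range of the
phase lets `ε → 0`. Hence `U f = c U|f|`, so `f` is a multiple of `|f|` and its eigenvalue is `r`:
the peripheral point spectrum is `{1}`.
-/

namespace ComplexLp

open scoped ComplexOrder Topology

theorem smul_eq_smul_add_of_norm_add_eq {E : Type*} [NormedAddCommGroup E] [NormedSpace ℝ E]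
    [StrictConvexSpace ℝ E] {a b : E} {s t : ℝ} (ha : ‖a‖ ≤ s) (hb : ‖b‖ ≤ t)
    (hab : ‖a + b‖ = s + t) : (s + t) • a = s • (a + b) := by
  have hsum : ‖a + b‖ ≤ ‖a‖ + ‖b‖ := norm_add_le a b
  have has : ‖a‖ = s := by linarith
  have hbt : ‖b‖ = t := by linarith
  have hray : ‖a‖ • b = ‖b‖ • a :=
    sameRay_iff_norm_smul_eq.1 (sameRay_iff_norm_add.2 (by rw [hab, has, hbt]))
  rw [add_smul, smul_add, ← has, ← hbt, hray]

theorem norm_sub_mul_norm_le_of_norm_mul_eq {u v c : ℂ} {s ε : ℝ} (hs : 0 < s)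
    (hv : ‖v - c * s‖ ≤ ε * s) (huv : ‖u‖ * v = s * u) : ‖u - c * ‖u‖‖ ≤ ε * ‖u‖ := by
  refine le_of_mul_le_mul_left ?_ hs
  calc s * ‖u - c * ‖u‖‖ = ‖(s : ℂ) * (u - c * ‖u‖)‖ := by
        rw [norm_mul, Complex.norm_of_nonneg hs.le]
    _ = ‖(‖u‖ : ℂ) * (v - c * s)‖ := by
        rw [mul_sub, ← huv]
        ring_nf
    _ = ‖u‖ * ‖v - c * s‖ := by rw [norm_mul, Complex.norm_real, norm_norm]
    _ ≤ ‖u‖ * (ε * s) := by gcongr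
    _ = s * (ε * ‖u‖) := by ring

section Measure

variable {α : Type*} [MeasurableSpace α] {μ : Measure α}

theorem ae_norm_le_of_forall_re_mul_le {f : α → ℂ} {g : α → ℝ}
    (h : ∀ c : ℂ, ∀ᵐ x ∂μ, (c * f x).re ≤ ‖c‖ * g x) : ∀ᵐ x ∂μ, ‖f x‖ ≤ g x := by
  have hdense : ∀ᵐ x ∂μ, ∀ n, (TopologicalSpace.denseSeq ℂ n * f x).re
      ≤ ‖TopologicalSpace.denseSeq ℂ n‖ * g x := ae_all_iff.2 fun n => h _
  filter_upwards [hdense] with x hx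
  have hall (c : ℂ) : (c * f x).re ≤ ‖c‖ * g x :=
    (TopologicalSpace.denseRange_denseSeq ℂ).induction_on
      (p := fun c => (c * f x).re ≤ ‖c‖ * g x) c
      (isClosed_le (by fun_prop) (by fun_prop)) hx
  rcases eq_or_ne (f x) 0 with h0 | h0
  · simpa [h0] using hall 1
  · have hconj : ‖f x‖ * ‖f x‖ ≤ ‖f x‖ * g x := by
      simpa [mul_comm _ (f x), Complex.mul_conj, Complex.normSq_eq_norm_sq, ← sq,
        ← Complex.ofReal_pow] using hall (starRingEnd ℂ (f x))
    exact le_of_mul_le_mul_left hconj (norm_pos_iff.2 h0)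

theorem exists_forall_measure_phase_near_pos {f : α → ℂ} (hf : ¬ f =ᵐ[μ] 0) :
    ∃ c : ℂ, ∀ ε > 0, 0 < μ {x | f x ≠ 0 ∧ ‖f x - c * ‖f x‖‖ ≤ ε * ‖f x‖} := by
  let phase : α → ℂ := fun x => f x / ‖f x‖
  have hphase : phase ⁻¹' {0}ᶜ = {x | f x ≠ 0} := by ext x; simp [phase]
  have hν : (OuterMeasure.map phase μ.toOuterMeasure) {0}ᶜ ≠ 0 := by
    rwa [OuterMeasure.map_apply, hphase]
  obtain ⟨c, -, hc⟩ := exists_mem_forall_mem_nhdsWithin_pos_measure hν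
  refine ⟨c, fun ε hε => ?_⟩
  have hball := hc (Metric.ball c ε ∩ {0}ᶜ)
    (inter_mem (mem_nhdsWithin_of_mem_nhds (Metric.ball_mem_nhds c hε)) self_mem_nhdsWithin)
  rw [OuterMeasure.map_apply, Set.preimage_inter, hphase] at hball
  refine hball.trans_le (measure_mono fun x ⟨hx, hx0⟩ => ⟨hx0, ?_⟩)
  have hne : (‖f x‖ : ℂ) ≠ 0 := by simpa using hx0
  have hxε : ‖phase x - c‖ < ε := by simpa [dist_eq_norm] using hx
  calc ‖f x - c * ‖f x‖‖ = ‖(phase x - c) * ‖f x‖‖ := by rw [sub_mul, div_mul_cancel₀ _ hne]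
    _ = ‖phase x - c‖ * ‖f x‖ := by rw [norm_mul, Complex.norm_real, norm_norm]
    _ ≤ ε * ‖f x‖ := by gcongr

end Measure

section Lp

variable {α : Type*} [MeasurableSpace α] {μ : Measure α} {p : ℝ≥0∞}

/-- The pointwise modulus `|f|`, as a complex-valued function. -/
noncomputable def modulus (f : Lp ℂ p μ) : Lp ℂ p μ :=
  (Lp.memLp f).norm.ofReal.toLp

/-- The pointwise real part `Re f`, as a complex-valued function. -/
noncomputable def rePart (f : Lp ℂ p μ) : Lp ℂ p μ :=
  (Lp.memLp f).re.ofReal.toLp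

/-- The product `1_A f` with the indicator function of a measurable set. -/
noncomputable def cutoff {E : Type*} [NormedAddCommGroup E] {A : Set α} (hA : MeasurableSet A)
    (f : Lp E p μ) : Lp E p μ :=
  ((Lp.memLp f).indicator hA).toLp

theorem coeFn_modulus (f : Lp ℂ p μ) : ∀ᵐ x ∂μ, modulus f x = ‖f x‖ :=
  (Lp.memLp f).norm.ofReal.coeFn_toLp

theorem coeFn_rePart (f : Lp ℂ p μ) : ∀ᵐ x ∂μ, rePart f x = (f x).re :=
  (Lp.memLp f).re.ofReal.coeFn_toLp

theorem coeFn_cutoff {E : Type*} [NormedAddCommGroup E] {A : Set α} (hA : MeasurableSet A)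
    (f : Lp E p μ) : ∀ᵐ x ∂μ, cutoff hA f x = A.indicator f x :=
  ((Lp.memLp f).indicator hA).coeFn_toLp

theorem nonneg_iff_ae {f : Lp ℂ p μ} : 0 ≤ f ↔ ∀ᵐ x ∂μ, (f x).im = 0 ∧ 0 ≤ (f x).re := by
  rw [← Lp.coeFn_nonneg]
  refine eventually_congr (.of_forall fun x => ?_)
  rw [Pi.zero_apply, Complex.nonneg_iff, and_comm, eq_comm]

theorem cutoff_ne_zero {E : Type*} [NormedAddCommGroup E] {A : Set α} (hA : MeasurableSet A)
    {f : Lp E p μ} (hf : ∀ᵐ x ∂μ, x ∈ A → f x ≠ 0) (hμA : μ A ≠ 0) : cutoff hA f ≠ 0 := by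
  refine fun h0 => hμA (measure_eq_zero_iff_ae_notMem.2 ?_)
  filter_upwards [h0 ▸ coeFn_cutoff hA f, hf, Lp.coeFn_zero E p μ] with x hcut hx hz hxA
  rw [hz, Set.indicator_of_mem hxA] at hcut
  exact hx hxA hcut.symm

theorem cutoff_nonneg {A : Set α} (hA : MeasurableSet A) {f : Lp ℂ p μ} (hf : 0 ≤ f) :
    0 ≤ cutoff hA f := by
  rw [← Lp.coeFn_nonneg] at hf ⊢
  filter_upwards [coeFn_cutoff hA f, hf] with x hx hx0
  rw [hx]
  exact Set.indicator_apply_nonneg fun _ => hx0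

theorem modulus_le_iff {f h : Lp ℂ p μ} : modulus f ≤ h ↔ ∀ᵐ x ∂μ, (‖f x‖ : ℂ) ≤ h x := by
  rw [← Lp.coeFn_le]
  exact eventually_congr ((coeFn_modulus f).mono fun x hx => by rw [hx])

theorem modulus_nonneg (f : Lp ℂ p μ) : 0 ≤ modulus f := by
  rw [← Lp.coeFn_nonneg]
  filter_upwards [coeFn_modulus f] with x hx
  simp [hx]

theorem rePart_le_modulus (f : Lp ℂ p μ) : rePart f ≤ modulus f := by
  rw [← Lp.coeFn_le]
  filter_upwards [coeFn_rePart f, coeFn_modulus f] with x hre hmod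
  rw [hre, hmod]
  exact_mod_cast Complex.re_le_norm (f x)

theorem modulus_smul (c : ℂ) (f : Lp ℂ p μ) : modulus (c • f) = (‖c‖ : ℂ) • modulus f := by
  apply Lp.ext
  filter_upwards [coeFn_modulus (c • f), coeFn_modulus f, Lp.coeFn_smul c f,
    Lp.coeFn_smul (‖c‖ : ℂ) (modulus f)] with x hcf hf hc hm
  rw [hcf, hm, hc, Pi.smul_apply, Pi.smul_apply, hf, norm_smul, Complex.ofReal_mul, smul_eq_mul]

theorem modulus_cutoff {A : Set α} (hA : MeasurableSet A) (f : Lp ℂ p μ) :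
    modulus (cutoff hA f) = cutoff hA (modulus f) := by
  apply Lp.ext
  filter_upwards [coeFn_modulus (cutoff hA f), coeFn_modulus f, coeFn_cutoff hA f,
    coeFn_cutoff hA (modulus f)] with x hmc hm hc hcm
  by_cases hx : x ∈ A <;> simp [hmc, hm, hc, hcm, hx]

theorem modulus_cutoff_sub_smul_le {A : Set α} (hA : MeasurableSet A) {f : Lp ℂ p μ} {c : ℂ}
    {ε : ℝ} (h : ∀ x ∈ A, ‖f x - c * ‖f x‖‖ ≤ ε * ‖f x‖) :
    modulus (cutoff hA f - c • cutoff hA (modulus f)) ≤ (ε : ℂ) • cutoff hA (modulus f) := by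
  rw [modulus_le_iff]
  filter_upwards [coeFn_cutoff hA f, coeFn_cutoff hA (modulus f), coeFn_modulus f,
    Lp.coeFn_sub (cutoff hA f) (c • cutoff hA (modulus f)),
    Lp.coeFn_smul c (cutoff hA (modulus f)), Lp.coeFn_smul (ε : ℂ) (cutoff hA (modulus f))]
    with x hcut hcutm hm hsub hc hε
  rw [hsub, hε, Pi.sub_apply, hc, Pi.smul_apply, Pi.smul_apply, hcut, hcutm]
  by_cases hx : x ∈ A
  · simpa only [Set.indicator_of_mem hx, hm, smul_eq_mul] using mod_cast h x hx
  · simp [hx]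

theorem modulus_sub_cutoff {A : Set α} (hA : MeasurableSet A) (f : Lp ℂ p μ) :
    modulus (f - cutoff hA f) = modulus f - cutoff hA (modulus f) := by
  apply Lp.ext
  filter_upwards [coeFn_modulus (f - cutoff hA f), coeFn_modulus f, coeFn_cutoff hA f,
    coeFn_cutoff hA (modulus f), Lp.coeFn_sub f (cutoff hA f),
    Lp.coeFn_sub (modulus f) (cutoff hA (modulus f))] with x hms hm hc hcm hs hsm
  rw [hms, hsm, hs, Pi.sub_apply, Pi.sub_apply, hc, hcm]
  by_cases hx : x ∈ A <;> simp [hm, hx]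

theorem rePart_add_I_smul_rePart (f : Lp ℂ p μ) :
    rePart f + Complex.I • rePart (-Complex.I • f) = f := by
  apply Lp.ext
  filter_upwards [coeFn_rePart f, coeFn_rePart (-Complex.I • f), Lp.coeFn_smul (-Complex.I) f,
    Lp.coeFn_smul Complex.I (rePart (-Complex.I • f)),
    Lp.coeFn_add (rePart f) (Complex.I • rePart (-Complex.I • f))] with x hre him hI hIre hadd
  have him_eq : ((-Complex.I • ⇑f) x).re = (f x).im := by simp
  rw [hadd, Pi.add_apply, hIre, Pi.smul_apply, hre, him, hI, him_eq, smul_eq_mul, mul_comm,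
    Complex.re_add_im]

theorem span_nonneg_eq_top : Submodule.span ℂ {f : Lp ℂ p μ | 0 ≤ f} = ⊤ := by
  refine eq_top_iff.2 fun f _ => ?_
  have hre (g : Lp ℂ p μ) : rePart g ∈ Submodule.span ℂ {f : Lp ℂ p μ | 0 ≤ f} := by
    rw [← sub_sub_cancel (modulus g) (rePart g)]
    exact sub_mem (Submodule.subset_span (modulus_nonneg g))
      (Submodule.subset_span (sub_nonneg.2 (rePart_le_modulus g)))
  rw [← rePart_add_I_smul_rePart f]
  exact add_mem (hre f) (Submodule.smul_mem _ _ (hre _))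

theorem tendsto_cutoff {E : Type*} [NormedAddCommGroup E] [Fact (1 ≤ p)] (hp : p ≠ ∞)
    {A : ℕ → Set α} (hA : ∀ n, MeasurableSet (A n)) (f : Lp E p μ)
    (h : ∀ᵐ x ∂μ, ∀ᶠ n in atTop, x ∈ A n) :
    Tendsto (fun n => cutoff (hA n) f) atTop (𝓝 f) := by
  have hp0 : p ≠ 0 := (one_pos.trans_le Fact.out).ne'
  have hpr : 0 < p.toReal := ENNReal.toReal_pos hp0 hp
  have hcut : ∀ᵐ x ∂μ, ∀ n, cutoff (hA n) f x = (A n).indicator f x :=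
    ae_all_iff.2 fun n => coeFn_cutoff (hA n) f
  have hlim : Tendsto (fun n => ∫⁻ x, ‖(cutoff (hA n) f - f : α → E) x‖ₑ ^ p.toReal ∂μ) atTop
      (𝓝 (∫⁻ _, 0 ∂μ)) := by
    refine tendsto_lintegral_of_dominated_convergence' (fun x => ‖f x‖ₑ ^ p.toReal)
      (fun n => ?_) (fun n => ?_)
      (lintegral_rpow_enorm_lt_top_of_eLpNorm_lt_top hp0 hp (Lp.eLpNorm_lt_top f)).ne ?_
    · exact ((Lp.aestronglyMeasurable _).sub (Lp.aestronglyMeasurable f)).enorm.pow_const _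
    · filter_upwards [hcut] with x hx
      rw [Pi.sub_apply, hx]
      gcongr
      by_cases hxA : x ∈ A n <;> simp [hxA]
    · filter_upwards [hcut, h] with x hx hxA
      refine tendsto_const_nhds.congr' (hxA.mono fun n hn => ?_)
      simp [hx, hn, hpr]
  rw [Lp.tendsto_Lp_iff_tendsto_eLpNorm']
  simp_rw [eLpNorm_eq_lintegral_rpow_enorm_toReal hp0 hp]
  simpa [hpr] using hlim.ennrpow_const (1 / p.toReal)

end Lp

section Positive

variable {α β : Type*} [MeasurableSpace α] [MeasurableSpace β] {μ : Measure α} {ν : Measure β}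
  {p q : ℝ≥0∞} {F : Type*} [FunLike F (Lp ℂ p μ) (Lp ℂ q ν)]
  [LinearMapClass F ℂ (Lp ℂ p μ) (Lp ℂ q ν)]

theorem map_rePart {U : F} (hU : Monotone U) (f : Lp ℂ p μ) : U (rePart f) = rePart (U f) := by
  have hnonneg := (monotone_iff_map_nonneg U).1 hU
  have him (g : Lp ℂ p μ) : ∀ᵐ x ∂ν, (U (rePart g) x).im = 0 := by
    have hsub := hnonneg _ (sub_nonneg.2 (rePart_le_modulus g))
    have hmod := hnonneg _ (modulus_nonneg g)
    rw [map_sub, ← Lp.coeFn_nonneg] at hsub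
    rw [← Lp.coeFn_nonneg] at hmod
    filter_upwards [hsub, hmod, Lp.coeFn_sub (U (modulus g)) (U (rePart g))] with x h₁ h₂ h₃
    rw [h₃, Pi.zero_apply, Pi.sub_apply, Complex.nonneg_iff, Complex.sub_im] at h₁
    rw [Pi.zero_apply, Complex.nonneg_iff] at h₂
    linarith [h₁.2, h₂.2]
  have hUf : U f = U (rePart f) + Complex.I • U (rePart (-Complex.I • f)) := by
    rw [← map_smul, ← map_add, rePart_add_I_smul_rePart]
  apply Lp.ext
  filter_upwards [him f, him (-Complex.I • f), coeFn_rePart (U f),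
    Lp.coeFn_add (U (rePart f)) (Complex.I • U (rePart (-Complex.I • f))),
    Lp.coeFn_smul Complex.I (U (rePart (-Complex.I • f)))] with x h₁ h₂ h₃ h₄ h₅
  rw [h₃, hUf, h₄, Pi.add_apply, h₅, Pi.smul_apply]
  apply Complex.ext
  · simpa using h₂
  · simp [h₁]

theorem modulus_map_le {U : F} (hU : Monotone U) {f h : Lp ℂ p μ} (hfh : modulus f ≤ h) :
    modulus (U f) ≤ U h := by
  have hUh : 0 ≤ U h :=
    (monotone_iff_map_nonneg U).1 hU h ((modulus_nonneg f).trans hfh)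
  have hrot (c : ℂ) : rePart (c • f) ≤ (‖c‖ : ℂ) • h := by
    refine (rePart_le_modulus _).trans ?_
    rw [modulus_smul, ← Lp.coeFn_le]
    rw [← Lp.coeFn_le] at hfh
    filter_upwards [hfh, Lp.coeFn_smul (‖c‖ : ℂ) (modulus f), Lp.coeFn_smul (‖c‖ : ℂ) h]
      with x hx hmod hh
    rw [hmod, hh]
    exact mul_le_mul_of_nonneg_left hx (by simp)
  have hre (c : ℂ) : ∀ᵐ x ∂ν, (c * U f x).re ≤ ‖c‖ * (U h x).re := by
    have hUc := hU (hrot c)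
    rw [map_rePart hU, map_smul, map_smul, ← Lp.coeFn_le] at hUc
    filter_upwards [hUc, coeFn_rePart (c • U f), Lp.coeFn_smul c (U f),
      Lp.coeFn_smul (‖c‖ : ℂ) (U h)] with x hx hr hc hh
    rw [hr, hc, hh] at hx
    simpa using (Complex.le_def.1 hx).1
  rw [modulus_le_iff]
  rw [← Lp.coeFn_nonneg] at hUh
  filter_upwards [ae_norm_le_of_forall_re_mul_le hre, hUh] with x hx hx0
  exact Complex.le_def.2 ⟨by simpa using hx, by simpa using (Complex.nonneg_iff.1 hx0).2⟩

theorem ae_map_modulus_mul_map_cutoff {U : F} (hU : Monotone U) {f : Lp ℂ p μ}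
    (hf : modulus (U f) = U (modulus f)) {A : Set α} (hA : MeasurableSet A) :
    ∀ᵐ x ∂ν, U (modulus f) x * U (cutoff hA f) x = U (cutoff hA (modulus f)) x * U f x := by
  have hin := modulus_le_iff.1 (modulus_map_le hU (modulus_cutoff hA f).le)
  have hout := modulus_le_iff.1 (modulus_map_le hU (modulus_sub_cutoff hA f).le)
  rw [map_sub, map_sub] at hout
  filter_upwards [hin, hout, hf ▸ coeFn_modulus (U f), Lp.coeFn_sub (U f) (U (cutoff hA f)),
    Lp.coeFn_sub (U (modulus f)) (U (cutoff hA (modulus f)))] with x hx₁ hx₂ hmod hs₁ hs₂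
  rw [hs₁, hs₂, Pi.sub_apply, Pi.sub_apply, hmod] at hx₂
  obtain ⟨s, hs⟩ : ∃ s : ℝ, U (cutoff hA (modulus f)) x = s :=
    ⟨_, (Complex.ext rfl (Complex.le_def.1 hx₁).2.symm)⟩
  rw [hs] at hx₁ hx₂ ⊢
  have hsmul := smul_eq_smul_add_of_norm_add_eq (s := s) (t := ‖U f x‖ - s)
    (by exact_mod_cast hx₁) (by exact_mod_cast hx₂) (by rw [add_sub_cancel, add_sub_cancel])
  rw [add_sub_cancel, add_sub_cancel] at hsmul
  simpa [hmod] using hsmul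

/-- A map between complex `L^p` spaces is *positivity improving* if it sends nonzero nonnegative
functions to a.e. strictly positive ones. The order on `ℂ` is that of `ComplexOrder`, in which
`0 < z` forces `z` to be real. -/
def IsPositivityImproving (U : Lp ℂ p μ → Lp ℂ q ν) : Prop :=
  ∀ f, 0 ≤ f → f ≠ 0 → ∀ᵐ x ∂ν, 0 < U f x

theorem isPositivityImproving_iff {U : Lp ℂ p μ → Lp ℂ q ν} :
    IsPositivityImproving U ↔ ∀ f, (∀ᵐ x ∂μ, (f x).im = 0 ∧ 0 ≤ (f x).re) → f ≠ 0 →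
      ∀ᵐ x ∂ν, (U f x).im = 0 ∧ 0 < (U f x).re := by
  simp only [IsPositivityImproving, nonneg_iff_ae, Complex.pos_iff, and_comm, eq_comm]

namespace IsPositivityImproving

theorem monotone {U : F} (hU : IsPositivityImproving U) : Monotone U := by
  refine (monotone_iff_map_nonneg U).2 fun f hf => ?_
  rcases eq_or_ne f 0 with rfl | hf0
  · exact (map_zero U).ge
  · exact (Lp.coeFn_nonneg _).1 ((hU f hf hf0).mono fun _ hx => hx.le)

theorem ae_norm_map_sub_le {U : F} (hU : IsPositivityImproving U) {f : Lp ℂ p μ}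
    (hf : modulus (U f) = U (modulus f)) {c : ℂ} {ε : ℝ}
    (hc : 0 < μ {x | f x ≠ 0 ∧ ‖f x - c * ‖f x‖‖ ≤ ε * ‖f x‖}) :
    ∀ᵐ x ∂ν, ‖U f x - c * U (modulus f) x‖ ≤ ε * ‖U f x‖ := by
  have hmeas : Measurable f := (Lp.stronglyMeasurable f).measurable
  set A : Set α := {x | f x ≠ 0 ∧ ‖f x - c * ‖f x‖‖ ≤ ε * ‖f x‖}
  have hA : MeasurableSet A :=
    (measurableSet_eq_fun hmeas measurable_const).compl.inter
      (measurableSet_le (f := fun x => ‖f x - c * ‖f x‖‖) (by fun_prop) (by fun_prop))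
  have hcut_nonneg : 0 ≤ cutoff hA (modulus f) := cutoff_nonneg hA (modulus_nonneg f)
  have hcut_ne : cutoff hA (modulus f) ≠ 0 := by
    refine cutoff_ne_zero hA ?_ hc.ne'
    filter_upwards [coeFn_modulus f] with x hx hxA
    rw [hx]
    exact_mod_cast norm_ne_zero_iff.2 hxA.1
  have hUdom := modulus_le_iff.1 <| modulus_map_le hU.monotone <|
    modulus_cutoff_sub_smul_le hA fun x hx => hx.2
  rw [map_sub, map_smul, map_smul] at hUdom
  filter_upwards [hUdom, hU _ hcut_nonneg hcut_ne,
    ae_map_modulus_mul_map_cutoff hU.monotone hf hA, hf ▸ coeFn_modulus (U f),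
    Lp.coeFn_sub (U (cutoff hA f)) (c • U (cutoff hA (modulus f))),
    Lp.coeFn_smul c (U (cutoff hA (modulus f))),
    Lp.coeFn_smul (ε : ℂ) (U (cutoff hA (modulus f)))] with x hx hpos hmul hmod h₁ h₂ h₃
  obtain ⟨s, hs⟩ : ∃ s : ℝ, U (cutoff hA (modulus f)) x = s :=
    ⟨_, (Complex.ext rfl (Complex.lt_def.1 hpos).2.symm)⟩
  rw [h₁, h₃, Pi.sub_apply, h₂, Pi.smul_apply, Pi.smul_apply, hs, smul_eq_mul, smul_eq_mul] at hx
  rw [hs] at hpos hmul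
  have hs0 : 0 < s := by exact_mod_cast hpos
  have hle : ‖U (cutoff hA f) x - c * s‖ ≤ ε * s := by exact_mod_cast hx
  rw [hmod] at hmul ⊢
  exact norm_sub_mul_norm_le_of_norm_mul_eq hs0 hle hmul

theorem exists_map_eq_smul_map_modulus {U : F} (hU : IsPositivityImproving U) {f : Lp ℂ p μ}
    (hf : modulus (U f) = U (modulus f)) : ∃ c : ℂ, U f = c • U (modulus f) := by
  rcases eq_or_ne f 0 with rfl | hf0
  · exact ⟨0, by rw [map_zero, zero_smul]⟩
  obtain ⟨c, hc⟩ := exists_forall_measure_phase_near_pos (mt (Lp.eq_zero_iff_ae_eq_zero).2 hf0)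
  have hsmall : ∀ᵐ x ∂ν, ∀ n : ℕ, ‖U f x - c * U (modulus f) x‖ ≤ 1 / ((n : ℝ) + 1) * ‖U f x‖ :=
    ae_all_iff.2 fun n => hU.ae_norm_map_sub_le hf (hc _ (by positivity))
  refine ⟨c, Lp.ext ?_⟩
  filter_upwards [hsmall, Lp.coeFn_smul c (U (modulus f))] with x hx hsmul
  have hlim : Tendsto (fun n : ℕ => 1 / ((n : ℝ) + 1) * ‖U f x‖) atTop (𝓝 0) := by
    simpa using tendsto_one_div_add_atTop_nhds_zero_nat.mul_const ‖U f x‖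
  rw [hsmul]
  exact sub_eq_zero.1 (norm_le_zero_iff.1 (ge_of_tendsto' hlim hx))

end IsPositivityImproving

end Positive

section Functional

variable {α : Type*} [MeasurableSpace α] {μ : Measure α} {p : ℝ≥0∞}

theorem monotone_functional_iff {F : Type*} [FunLike F (Lp ℂ p μ) ℂ]
    [AddMonoidHomClass F (Lp ℂ p μ) ℂ] {φ : F} :
    Monotone φ ↔ ∀ f : Lp ℂ p μ, (∀ᵐ x ∂μ, (f x).im = 0 ∧ 0 ≤ (f x).re) →
      (φ f).im = 0 ∧ 0 ≤ (φ f).re := by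
  simp only [monotone_iff_map_nonneg, nonneg_iff_ae, Complex.nonneg_iff, and_comm, eq_comm]

theorem measurableSet_re_le_mul (f g : Lp ℂ p μ) (t : ℝ) :
    MeasurableSet {x | (f x).re ≤ t * (g x).re} := by
  have hf := (Lp.stronglyMeasurable f).measurable
  have hg := (Lp.stronglyMeasurable g).measurable
  exact measurableSet_le (by fun_prop) (by fun_prop)

theorem cutoff_re_le_mul_le_smul {f g : Lp ℂ p μ} (hf : 0 ≤ f) (hg : 0 ≤ g) {t : ℝ} (ht : 0 ≤ t) :
    cutoff (measurableSet_re_le_mul f g t) f ≤ (t : ℂ) • g := by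
  rw [← Lp.coeFn_nonneg] at hf hg
  rw [← Lp.coeFn_le]
  filter_upwards [coeFn_cutoff (measurableSet_re_le_mul f g t) f, hf, hg,
    Lp.coeFn_smul (t : ℂ) g] with x hcut hfx hgx hsmul
  rw [hcut, hsmul, Pi.smul_apply, smul_eq_mul]
  refine Set.indicator_apply_le' (fun hx => ?_) fun _ => mul_nonneg (by exact_mod_cast ht) hgx
  have hle : (f x).re ≤ t * (g x).re := hx
  refine Complex.le_def.2 ⟨by simpa using hle, ?_⟩
  simp [← (Complex.nonneg_iff.1 hfx).2, ← (Complex.nonneg_iff.1 hgx).2]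

variable [Fact (1 ≤ p)]

theorem tendsto_cutoff_re_le_nat_mul (hp : p ≠ ∞) {e : Lp ℂ p μ} (he : ∀ᵐ x ∂μ, 0 < e x)
    (h : Lp ℂ p μ) :
    Tendsto (fun n : ℕ => cutoff (measurableSet_re_le_mul h e n) h) atTop (𝓝 h) := by
  refine tendsto_cutoff hp (fun n : ℕ => measurableSet_re_le_mul h e n) h ?_
  filter_upwards [he] with x hx
  have hx_re : 0 < (e x).re := (Complex.pos_iff.1 hx).1
  exact (tendsto_natCast_atTop_atTop.atTop_mul_const hx_re).eventually_ge_atTop _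

theorem eq_zero_of_map_eq_zero_of_ae_pos (hp : p ≠ ∞) {φ : Lp ℂ p μ →L[ℂ] ℂ} (hφ : Monotone φ)
    {e : Lp ℂ p μ} (he : ∀ᵐ x ∂μ, 0 < e x) (hφe : φ e = 0) : φ = 0 := by
  have hφ0 := (monotone_iff_map_nonneg φ).1 hφ
  suffices hnonneg : ∀ h : Lp ℂ p μ, 0 ≤ h → φ h = 0 from
    ContinuousLinearMap.coe_injective (LinearMap.ext_on span_nonneg_eq_top hnonneg)
  intro h hh
  have he_nonneg : 0 ≤ e := (Lp.coeFn_nonneg e).1 (he.mono fun _ hx => hx.le)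
  have hcut (n : ℕ) : φ (cutoff (measurableSet_re_le_mul h e n) h) = 0 := by
    refine le_antisymm ?_ (hφ0 _ (cutoff_nonneg _ hh))
    simpa [hφe] using hφ (cutoff_re_le_mul_le_smul hh he_nonneg n.cast_nonneg)
  have hlim := (φ.continuous.tendsto h).comp (tendsto_cutoff_re_le_nat_mul hp he h)
  exact tendsto_nhds_unique hlim (tendsto_const_nhds.congr fun n => (hcut n).symm)

theorem IsPositivityImproving.map_eq_smul_of_smul_le (hp : p ≠ ∞)
    {U : Lp ℂ p μ → Lp ℂ p μ} (hU : IsPositivityImproving U) {φ : Lp ℂ p μ →L[ℂ] ℂ}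
    (hφ : Monotone φ) (hφ0 : φ ≠ 0) {r : ℂ} (hφU : ∀ f, φ (U f) = r * φ f) {h : Lp ℂ p μ}
    (hh : r • h ≤ U h) : U h = r • h := by
  by_contra hne
  have hpos := hU _ (sub_nonneg.2 hh) (sub_ne_zero.2 hne)
  refine hφ0 (eq_zero_of_map_eq_zero_of_ae_pos hp hφ hpos ?_)
  rw [hφU, map_sub, hφU, map_smul, smul_eq_mul, sub_self, mul_zero]

end Functional

section Eigenvalue

variable {α : Type*} [MeasurableSpace α] {μ : Measure α} {p : ℝ≥0∞}
  {F : Type*} [FunLike F (Lp ℂ p μ) (Lp ℂ p μ)]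
  [LinearMapClass F ℂ (Lp ℂ p μ) (Lp ℂ p μ)] {U : F}

theorem IsPositivityImproving.eigenvalue_eq_norm (hU : IsPositivityImproving U) {f : Lp ℂ p μ}
    (hf0 : f ≠ 0) {l : ℂ} (hf : U f = l • f) (hmod : U (modulus f) = (‖l‖ : ℂ) • modulus f) :
    l = ‖l‖ := by
  rcases eq_or_ne l 0 with rfl | hl
  · simp
  obtain ⟨c, hc⟩ := hU.exists_map_eq_smul_map_modulus (f := f) (by rw [hf, modulus_smul, hmod])
  have hfc : f = (l⁻¹ * c * ‖l‖) • modulus f := by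
    rw [mul_smul, mul_smul, ← hmod, ← hc, hf, inv_smul_smul₀ hl]
  refine smul_left_injective ℂ hf0 ?_
  calc l • f = U f := hf.symm
    _ = (l⁻¹ * c * ‖l‖) • U (modulus f) := by rw [← map_smul, ← hfc]
    _ = (‖l‖ : ℂ) • f := by rw [hmod, smul_comm, ← hfc]

end Eigenvalue

end ComplexLp

section General

open ComplexLp ComplexOrder

theorem peripheral_point_spectrum_subgroup_general
    {α : Type*} [MeasurableSpace α] {μ : Measure α} {p : ℝ≥0∞} [Fact (1 ≤ p)] (hp : p ≠ ∞)
    {F : Type*} [FunLike F (Lp ℂ p μ) (Lp ℂ p μ)] [LinearMapClass F ℂ (Lp ℂ p μ) (Lp ℂ p μ)]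
    {U : F} (hU : IsPositivityImproving U) {r : ℝ} (hr : 0 < r)
    {f₀ : Lp ℂ p μ} (hf₀ : f₀ ≠ 0) (hUf₀ : U f₀ = (r : ℂ) • f₀)
    {φ₀ : Lp ℂ p μ →L[ℂ] ℂ} (hφ₀ : Monotone φ₀) (hφ₀0 : φ₀ ≠ 0)
    (hφ₀U : ∀ f, φ₀ (U f) = (r : ℂ) * φ₀ f) :
    {z : ℂ | ‖z‖ = 1 ∧ ∃ f : Lp ℂ p μ, f ≠ 0 ∧ U f = ((r : ℂ) * z) • f} = {1} := by
  refine Set.eq_singleton_iff_unique_mem.2 ⟨⟨norm_one, f₀, hf₀, by rwa [mul_one]⟩, ?_⟩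
  rintro z ⟨hz, f, hf, hUf⟩
  have hnorm : ‖(r : ℂ) * z‖ = r := by rw [norm_mul, hz, mul_one, Complex.norm_of_nonneg hr.le]
  have hsub : (r : ℂ) • modulus f ≤ U (modulus f) :=
    calc (r : ℂ) • modulus f = modulus (U f) := by rw [hUf, modulus_smul, hnorm]
      _ ≤ U (modulus f) := modulus_map_le hU.monotone le_rfl
  have hmod := hU.map_eq_smul_of_smul_le hp hφ₀ hφ₀0 hφ₀U hsub
  have heq := hU.eigenvalue_eq_norm hf hUf (by rw [hmod, hnorm])
  rw [hnorm] at heq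
  exact (mul_eq_left₀ (Complex.ofReal_ne_zero.2 hr.ne')).1 heq

end General

/-- **Theorem 2.2 iii).** Let `U` be a positive bounded linear operator on the complex space
`X_ℂ = L^p(E, μ; ℂ)` whose restriction to the real subspace is strictly positive, with
spectral radius `r(U) > 0` (Gelfand formula), and suppose there exist real a.e.-nonnegative
`f₀ ≠ 0` and a nonnegative functional `φ₀ ≠ 0` with `U f₀ = r(U) f₀` and
`U* φ₀ = r(U) φ₀`.  Then the peripheral point spectrum of `Ũ = U / r(U)`, i.e. the set of
eigenvalues of `Ũ` of modulus `1`, is a multiplicative subgroup of the unit circle: it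
contains `1` and is closed under multiplication and inverses. -/
theorem peripheral_point_spectrum_subgroup
    {α : Type*} [MeasurableSpace α] {μ : Measure α} [SigmaFinite μ]
    {p : ℝ≥0∞} [Fact (1 ≤ p)] (hp : p ≠ ∞)
    (U : Lp ℂ p μ →L[ℂ] Lp ℂ p μ)
    (hreal : ∀ f : Lp ℂ p μ, (∀ᵐ x ∂μ, (f x).im = 0) → (∀ᵐ x ∂μ, ((U f) x).im = 0))
    (hpos : ∀ f : Lp ℂ p μ, (∀ᵐ x ∂μ, (f x).im = 0 ∧ 0 ≤ (f x).re) →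
      (∀ᵐ x ∂μ, ((U f) x).im = 0 ∧ 0 ≤ ((U f) x).re))
    (hstrict : ∀ f : Lp ℂ p μ, (∀ᵐ x ∂μ, (f x).im = 0 ∧ 0 ≤ (f x).re) → f ≠ 0 →
      (∀ᵐ x ∂μ, ((U f) x).im = 0 ∧ 0 < ((U f) x).re))
    (r : ℝ) (hr : Tendsto (fun n : ℕ => ‖U ^ n‖ ^ (1 / (n : ℝ))) atTop (nhds r))
    (hr0 : 0 < r)
    (f₀ : Lp ℂ p μ) (hf₀pos : ∀ᵐ x ∂μ, (f₀ x).im = 0 ∧ 0 ≤ (f₀ x).re) (hf₀ne : f₀ ≠ 0)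
    (hf₀ : U f₀ = (r : ℂ) • f₀)
    (φ₀ : Lp ℂ p μ →L[ℂ] ℂ)
    (hφ₀pos : ∀ f : Lp ℂ p μ, (∀ᵐ x ∂μ, (f x).im = 0 ∧ 0 ≤ (f x).re) →
      (φ₀ f).im = 0 ∧ 0 ≤ (φ₀ f).re)
    (hφ₀ne : φ₀ ≠ 0) (hφ₀ : ∀ f, φ₀ (U f) = (r : ℂ) * φ₀ f) :
    (1 : ℂ) ∈ {z : ℂ | ‖z‖ = 1 ∧ ∃ f : Lp ℂ p μ, f ≠ 0 ∧ U f = ((r : ℂ) * z) • f} ∧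
    (∀ z w : ℂ, z ∈ {z : ℂ | ‖z‖ = 1 ∧ ∃ f : Lp ℂ p μ, f ≠ 0 ∧ U f = ((r : ℂ) * z) • f} →
      w ∈ {z : ℂ | ‖z‖ = 1 ∧ ∃ f : Lp ℂ p μ, f ≠ 0 ∧ U f = ((r : ℂ) * z) • f} →
      z * w ∈ {z : ℂ | ‖z‖ = 1 ∧ ∃ f : Lp ℂ p μ, f ≠ 0 ∧ U f = ((r : ℂ) * z) • f}) ∧
    (∀ z : ℂ, z ∈ {z : ℂ | ‖z‖ = 1 ∧ ∃ f : Lp ℂ p μ, f ≠ 0 ∧ U f = ((r : ℂ) * z) • f} →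
      z⁻¹ ∈ {z : ℂ | ‖z‖ = 1 ∧ ∃ f : Lp ℂ p μ, f ≠ 0 ∧ U f = ((r : ℂ) * z) • f}) := by
  rw [peripheral_point_spectrum_subgroup_general hp
    (ComplexLp.isPositivityImproving_iff.2 hstrict) hr0 hf₀ne hf₀
    (ComplexLp.monotone_functional_iff.2 hφ₀pos) hφ₀ne hφ₀]
  simp
end

section
/- Let f ∈ X with f > 0 a.e., let X_f = {g ∈ X : ∃ C > 0, |g| ≤ C f a.e.}, and for g ∈ X_f set [g]_f = inf{C > 0 : |g| ≤ C f a.e.}. If Q : X_f → X_f is a linear operator such that Q f = f and [Q g]_f ≤ [g]_f for every g ∈ X_f, then Q is positive: for every g ∈ X_f with g ≥ 0 a.e., one has Q g ≥ 0 a.e. -/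
open MeasureTheory Filter ENNReal

/-! If `0 ≤ g ≤ C • u`, then `C • u - g` also lies between `0` and `C • u`, so its gauge is at most
`C`. Because the positive cone is closed, the bound `|h| ≤ [h]_v • v` survives the passage to the
infimum. A linear gauge-contraction `Q` with `Q u = v` therefore satisfies `|C • v - Q g| ≤ C • v`,
whose upper half says `0 ≤ Q g`. -/

section VectorLattice

variable {E : Type*} [AddCommGroup E] [Lattice E] [Module ℝ E]

/-- The gauge `[g]_u` of the order interval `[-u, u]`. It is meaningful for `g` in the order ideal
generated by `u`; elsewhere the infimum is over the empty set and the gauge is `0`. -/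
noncomputable def principalGauge (u g : E) : ℝ :=
  sInf {C : ℝ | 0 < C ∧ |g| ≤ C • u}

theorem principalGauge_le {u g : E} {C : ℝ} (hC : 0 < C) (hg : |g| ≤ C • u) :
    principalGauge u g ≤ C :=
  csInf_le ⟨0, fun _ hD => hD.1.le⟩ ⟨hC, hg⟩

theorem abs_le_principalGauge_smul [TopologicalSpace E] [ClosedIciTopology E]
    [ContinuousSMul ℝ E] {u g : E} (hg : ∃ C > (0 : ℝ), |g| ≤ C • u) :
    |g| ≤ principalGauge u g • u := by
  have isClosed_bounds : IsClosed {C : ℝ | |g| ≤ C • u} :=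
    isClosed_Ici.preimage (continuous_id.smul continuous_const)
  exact closure_minimal (fun _ hC => hC.2) isClosed_bounds
    (csInf_mem_closure hg ⟨0, fun _ hC => hC.1.le⟩)

variable [PosSMulMono ℝ E]

theorem abs_smul_le_abs_smul_abs (c : ℝ) (g : E) : |c • g| ≤ |c| • |g| := by
  have abs_smul_le {a : ℝ} (ha : 0 ≤ a) (h : E) : |a • h| ≤ a • |h| := by
    rw [abs_le', ← smul_neg]
    exact ⟨smul_le_smul_of_nonneg_left (le_abs_self h) ha,
      smul_le_smul_of_nonneg_left (neg_le_abs h) ha⟩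
  obtain hc | hc := le_total 0 c
  · simpa only [abs_of_nonneg hc] using abs_smul_le hc g
  · simpa only [abs_of_nonpos hc, neg_smul, abs_neg] using abs_smul_le (neg_nonneg.2 hc) g

variable [IsOrderedAddMonoid E] {u : E}

/-- The order ideal `E_u` generated by a positive vector `u`. -/
def principalIdeal (hu : 0 ≤ u) : Submodule ℝ E where
  carrier := {g | ∃ C > (0 : ℝ), |g| ≤ C • u}
  zero_mem' := ⟨1, one_pos, by simpa only [abs_zero, one_smul] using hu⟩
  add_mem' := by
    rintro g h ⟨C, hC, hg⟩ ⟨D, hD, hh⟩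
    exact ⟨C + D, add_pos hC hD,
      (abs_add_le g h).trans ((add_le_add hg hh).trans_eq (add_smul C D u).symm)⟩
  smul_mem' := by
    rintro c g ⟨C, hC, hg⟩
    refine ⟨(|c| + 1) * C, by positivity, ?_⟩
    calc |c • g| ≤ |c| • |g| := abs_smul_le_abs_smul_abs c g
      _ ≤ |c| • C • u := smul_le_smul_of_nonneg_left hg (abs_nonneg c)
      _ ≤ |c| • C • u + C • u := le_add_of_nonneg_right (smul_nonneg hC.le hu)
      _ = ((|c| + 1) * C) • u := by rw [mul_smul, add_smul, one_smul]

theorem self_mem_principalIdeal (hu : 0 ≤ u) : u ∈ principalIdeal hu :=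
  ⟨1, one_pos, by rw [abs_of_nonneg hu, one_smul]⟩

end VectorLattice

instance instPosSMulMonoLp {𝕜 α E : Type*} [NormedRing 𝕜] [Preorder 𝕜] [NormedAddCommGroup E]
    [PartialOrder E] [Module 𝕜 E] [IsBoundedSMul 𝕜 E] [PosSMulMono 𝕜 E] [MeasurableSpace α]
    {μ : Measure α} {p : ℝ≥0∞} : PosSMulMono 𝕜 (Lp E p μ) where
  smul_le_smul_of_nonneg_left c hc f g hfg := by
    rw [← Lp.coeFn_le] at hfg ⊢
    filter_upwards [hfg, Lp.coeFn_smul c f, Lp.coeFn_smul c g] with x hx hcf hcg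
    simpa only [hcf, hcg, Pi.smul_apply] using smul_le_smul_of_nonneg_left hx hc

theorem contraction_fixing_positive_function_is_positive_general
    {E F : Type*} [AddCommGroup E] [Lattice E] [IsOrderedAddMonoid E] [Module ℝ E]
    [PosSMulMono ℝ E] [AddCommGroup F] [Lattice F] [IsOrderedAddMonoid F] [Module ℝ F]
    [PosSMulMono ℝ F] [TopologicalSpace F] [ClosedIciTopology F] [ContinuousSMul ℝ F]
    {u : E} {v : F} (hu : 0 ≤ u) (hv : 0 ≤ v)
    (Q : principalIdeal hu →ₗ[ℝ] principalIdeal hv)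
    (hQu : Q ⟨u, self_mem_principalIdeal hu⟩ = ⟨v, self_mem_principalIdeal hv⟩)
    (hQ : ∀ g, principalGauge v (Q g : F) ≤ principalGauge u (g : E)) :
    ∀ g, 0 ≤ g → 0 ≤ Q g := by
  intro g hg
  obtain ⟨C, hC, hgC⟩ := g.2
  let k : principalIdeal hu := C • ⟨u, self_mem_principalIdeal hu⟩ - g
  have abs_k_le : |(k : E)| ≤ C • u := by
    have k_nonneg : 0 ≤ (k : E) := sub_nonneg.2 ((le_abs_self _).trans hgC)
    rw [abs_of_nonneg k_nonneg]
    exact sub_le_self _ hg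
  have map_k : (Q k : F) = C • v - Q g := by
    simp only [k, map_sub, map_smul, hQu, Submodule.coe_sub, Submodule.coe_smul]
  have sub_le : C • v - Q g ≤ C • v := calc
    C • v - Q g ≤ |(Q k : F)| := map_k ▸ le_abs_self _
    _ ≤ principalGauge v (Q k : F) • v := abs_le_principalGauge_smul (Q k).2
    _ ≤ C • v := smul_le_smul_of_nonneg_right ((hQ k).trans (principalGauge_le hC abs_k_le)) hv
  exact (sub_le_self_iff (C • v)).1 sub_le

/-- **Lemma 2.3 (from [FGM, Lemma 5.3]).** Let `f ∈ X = L^p(E, μ)` with `f > 0` a.e.,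
let `X_f = {g : ∃ C > 0, |g| ≤ C f}` and, for `g ∈ X_f`,
`[g]_f = inf {C > 0 : |g| ≤ C f}`.  If `Q` maps `X_f` into `X_f`, is linear on `X_f`,
satisfies `Q f = f` and `[Q g]_f ≤ [g]_f` for every `g ∈ X_f`, then `Q` is positive on
`X_f`: `g ∈ X_f` and `g ≥ 0` imply `Q g ≥ 0`. -/
theorem contraction_fixing_positive_function_is_positive
    {α : Type*} [MeasurableSpace α] {μ : Measure α} [SigmaFinite μ]
    {p : ℝ≥0∞} [Fact (1 ≤ p)] (hp : p ≠ ∞)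
    (f : Lp ℝ p μ) (hf : ∀ᵐ x ∂μ, 0 < f x)
    (Q : Lp ℝ p μ → Lp ℝ p μ)
    (hQmap : ∀ g : Lp ℝ p μ, (∃ C > (0:ℝ), |g| ≤ C • f) → ∃ C > (0:ℝ), |Q g| ≤ C • f)
    (hQadd : ∀ g h : Lp ℝ p μ, (∃ C > (0:ℝ), |g| ≤ C • f) → (∃ C > (0:ℝ), |h| ≤ C • f) →
      Q (g + h) = Q g + Q h)
    (hQsmul : ∀ (c : ℝ) (g : Lp ℝ p μ), (∃ C > (0:ℝ), |g| ≤ C • f) → Q (c • g) = c • Q g)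
    (hQf : Q f = f)
    (hQcontr : ∀ g : Lp ℝ p μ, (∃ C > (0:ℝ), |g| ≤ C • f) →
      sInf {C : ℝ | 0 < C ∧ |Q g| ≤ C • f} ≤ sInf {C : ℝ | 0 < C ∧ |g| ≤ C • f}) :
    ∀ g : Lp ℝ p μ, (∃ C > (0:ℝ), |g| ≤ C • f) → 0 ≤ g → 0 ≤ Q g := by
  have hf0 : 0 ≤ f := (Lp.coeFn_nonneg f).1 (hf.mono fun _ => le_of_lt)
  let Qf : principalIdeal hf0 →ₗ[ℝ] principalIdeal hf0 :=
    { toFun := fun g => ⟨Q g, hQmap g g.2⟩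
      map_add' := fun g h => Subtype.ext (hQadd g h g.2 h.2)
      map_smul' := fun c g => Subtype.ext (hQsmul c g g.2) }
  exact fun g hg => contraction_fixing_positive_function_is_positive_general hf0 hf0 Qf
    (Subtype.ext hQf) (fun g => hQcontr g g.2) ⟨g, hg⟩
end
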